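/- Let K/ℚ be a finite Galois extension. For every ε > 0 there exist constants μ_{K,ε} > 0 and r_{K,ε} > 0 such that for all real r > r_{K,ε}, one has log C_{r,K} > μ_{K,ε} · r^{1/(1+ε)} / log r. -/

import Mathlib

open NumberField

/-- The ideal divisor function `σ_{r,K}(I) = ∑_{J ∣ I} N(J)^{-r}`. -/
noncomputable def sigmaK (K : Type*) [Field K] [NumberField K] (r : ℝ)
    (I : Ideal (𝓞 K)) : ℝ :=
  ∑' J : {J : Ideal (𝓞 K) // J ∣ I}, (Ideal.absNorm (J : Ideal (𝓞 K)) : ℝ) ^ (-r)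

/-!
Let `0 < α < β < 1`. For `n ≈ r^β` the term `k^{-r}` exceeds the sum of `N(J)^{-r}` over all ideals
`J` of norm larger than `k`, by a uniform margin, for every `k ≤ n`. So the value of the divisor sum
at `I` determines, one norm after the other, how many divisors of each norm `m ≤ n` the ideal `I`
has, and these counts are constant on each connected component of the closure. Products over
distinct subsets of a set of ideals of distinct prime norms at most `n` have different counts and
hence lie in different components. There are at least `c * r^α` such primes: the asymptotics
`∑ log N(P) / N(P) ∼ log x` over the primes `P` of norm at most `x`, a consequence of the linear
growth of the number of ideals of bounded norm, put many of them between `x` and `x^{1+η}`.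

Since `Nat.card` of an infinite type is `0`, one also needs that there are finitely many components.
For large `q`, the primes of norm between `q` and `q^{1+η}` already have an ideal with
`σ(J) ≥ 1 + q^{-r}`. A greedy choice of exponents, prime by prime, then approximates every value
between `σ(I)` and `σ(I) σ(J)`, where `I` is composed of small and `J` of large primes. Each value
thus lies in an interval, contained in the closure, whose length is bounded below.
-/

open Filter Topology Finset

section IdealCounting

variable (K : Type*) [Field K] [NumberField K]

/-- The nonzero integral ideals of norm at most `x`. -/
noncomputable def idealsLE (x : ℝ) : Finset (Ideal (𝓞 K)) :=
  ((Ideal.finite_setOfPred_absNorm_le ⌊x⌋₊).subset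
    (t := {I : Ideal (𝓞 K) | I ≠ 0 ∧ (Ideal.absNorm I : ℝ) ≤ x})
    fun _ hI ↦ Nat.le_floor hI.2).toFinset

variable {K}

lemma mem_idealsLE {x : ℝ} {I : Ideal (𝓞 K)} :
    I ∈ idealsLE K x ↔ I ≠ 0 ∧ (Ideal.absNorm I : ℝ) ≤ x := by
  simp [idealsLE]

lemma absNorm_pos_of_ne_zero {I : Ideal (𝓞 K)} (hI : I ≠ 0) : 0 < Ideal.absNorm I :=
  Nat.pos_of_ne_zero (Ideal.absNorm_eq_zero_iff.not.2 hI)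

lemma one_lt_absNorm_of_prime {P : Ideal (𝓞 K)} (hP : Prime P) : 1 < Ideal.absNorm P := by
  refine lt_of_le_of_ne (absNorm_pos_of_ne_zero hP.ne_zero) fun h ↦ hP.ne_one ?_
  rw [Ideal.one_eq_top, Ideal.absNorm_eq_one_iff.1 h.symm]

lemma prime_of_prime_absNorm {P : Ideal (𝓞 K)} (hP : (Ideal.absNorm P).Prime) : Prime P :=
  (Ideal.irreducible_of_irreducible_absNorm hP).prime

lemma card_idealsLE_of_lt_one {x : ℝ} (hx : x < 1) : #(idealsLE K x) = 0 := by
  refine card_eq_zero.2 (eq_empty_of_forall_notMem fun I hI ↦ ?_)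
  have ⟨hI, hIx⟩ := mem_idealsLE.1 hI
  have : (1 : ℝ) ≤ Ideal.absNorm I := mod_cast absNorm_pos_of_ne_zero hI
  linarith

lemma card_filter_dvd_idealsLE {J : Ideal (𝓞 K)} (hJ : J ≠ 0) (x : ℝ) [DecidablePred (J ∣ ·)] :
    #{I ∈ idealsLE K x | J ∣ I} = #(idealsLE K (x / Ideal.absNorm J)) := by
  have hJpos : (0 : ℝ) < Ideal.absNorm J := mod_cast absNorm_pos_of_ne_zero hJ
  have hmem (I : Ideal (𝓞 K)) :
      J * I ∈ idealsLE K x ↔ I ∈ idealsLE K (x / Ideal.absNorm J) := by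
    rw [mem_idealsLE, mem_idealsLE, map_mul, Nat.cast_mul, le_div_iff₀' hJpos, mul_ne_zero_iff]
    tauto
  refine (card_bij (fun I _ ↦ J * I) (fun I hI ↦ ?_) (fun I _ I' _ h ↦ mul_left_cancel₀ hJ h)
    fun I hI ↦ ?_).symm
  · exact mem_filter.2 ⟨(hmem I).2 hI, dvd_mul_right J I⟩
  · obtain ⟨hI, I', rfl⟩ := mem_filter.1 hI
    exact ⟨I', (hmem I').1 hI, rfl⟩

variable (K)

lemma tendsto_card_idealsLE_div :
    Tendsto (fun x : ℝ ↦ #(idealsLE K x) / x) atTop (𝓝 (dedekindZeta_residue K)) := by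
  rw [dedekindZeta_residue_def]
  refine (Ideal.tendsto_norm_le_div_atTop₀ K).congr fun x ↦ ?_
  let e : {I : nonZeroDivisors (Ideal (𝓞 K)) // (Ideal.absNorm (I : Ideal (𝓞 K)) : ℝ) ≤ x} ≃
      idealsLE K x :=
    { toFun I := ⟨I, mem_idealsLE.2 ⟨nonZeroDivisors.coe_ne_zero _, I.2⟩⟩
      invFun I := ⟨⟨I, mem_nonZeroDivisors_of_ne_zero (mem_idealsLE.1 I.2).1⟩,
        (mem_idealsLE.1 I.2).2⟩ }
  rw [Nat.card_congr e, Nat.card_eq_fintype_card, Fintype.card_coe]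

lemma exists_abs_card_idealsLE_sub_le {η : ℝ} (hη : 0 < η) :
    ∃ B : ℝ, ∀ x, 0 ≤ x → |#(idealsLE K x) - dedekindZeta_residue K * x| ≤ η * x + B := by
  have hκ := dedekindZeta_residue_pos K
  obtain ⟨X, hX⟩ := eventually_atTop.1
    ((tendsto_card_idealsLE_div K).eventually (Metric.ball_mem_nhds _ hη))
  refine ⟨#(idealsLE K (max X 1)) + dedekindZeta_residue K * max X 1, fun x hx ↦ ?_⟩
  rcases le_total (max X 1) x with hXx | hxX
  · have hx0 : 0 < x := by linarith [le_max_right X 1]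
    have h := (hX x ((le_max_left _ _).trans hXx)).le
    rw [Real.dist_eq, ← mul_le_mul_iff_of_pos_right hx0, ← abs_of_pos hx0, ← abs_mul,
      abs_of_pos hx0, sub_mul, div_mul_cancel₀ _ hx0.ne'] at h
    have : 0 ≤ dedekindZeta_residue K * max X 1 := by positivity
    linarith [Nat.cast_nonneg (α := ℝ) #(idealsLE K (max X 1))]
  · have hcard : #(idealsLE K x) ≤ #(idealsLE K (max X 1)) :=
      card_le_card fun I hI ↦ mem_idealsLE.2 ((mem_idealsLE.1 hI).imp_right (·.trans hxX))
    have hcard : (#(idealsLE K x) : ℝ) ≤ #(idealsLE K (max X 1)) := mod_cast hcard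
    have := mul_le_mul_of_nonneg_left hxX hκ.le
    have := mul_nonneg hκ.le hx
    have := mul_nonneg hη.le hx
    rw [abs_le]
    constructor <;> linarith [Nat.cast_nonneg (α := ℝ) #(idealsLE K x)]

lemma exists_card_idealsLE_le_mul : ∃ C : ℝ, ∀ x, 0 ≤ x → #(idealsLE K x) ≤ C * x := by
  have hκ := dedekindZeta_residue_pos K
  obtain ⟨B, hB⟩ := exists_abs_card_idealsLE_sub_le K one_pos
  have hB0 : 0 ≤ B := by simpa using (abs_nonneg _).trans (hB 0 le_rfl)
  refine ⟨dedekindZeta_residue K + 1 + B, fun x hx ↦ ?_⟩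
  rcases lt_or_ge x 1 with hx1 | hx1
  · rw [card_idealsLE_of_lt_one hx1, Nat.cast_zero]
    positivity
  · have := (abs_le.1 (hB x hx)).2
    nlinarith

end IdealCounting

section VonMangoldt

open UniqueFactorizationMonoid

variable {K : Type*} [Field K] [NumberField K]

open Classical in
/-- The von Mangoldt function of a number field: `log N(P)` at a positive power of a prime ideal
`P`, which is recovered as the radical of that power, and `0` at all other ideals. -/
noncomputable def idealVonMangoldt (J : Ideal (𝓞 K)) : ℝ :=
  if IsPrimePow J then Real.log (Ideal.absNorm (radical J)) else 0

lemma idealVonMangoldt_nonneg (J : Ideal (𝓞 K)) : 0 ≤ idealVonMangoldt J := by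
  rw [idealVonMangoldt]
  split_ifs
  exacts [Real.log_natCast_nonneg _, le_rfl]

lemma idealVonMangoldt_pow {P : Ideal (𝓞 K)} (hP : Prime P) {k : ℕ} (hk : k ≠ 0) :
    idealVonMangoldt (P ^ k) = Real.log (Ideal.absNorm P) := by
  rw [idealVonMangoldt, if_pos (hP.isPrimePow.pow hk), radical_pow_of_prime hP hk, normalize_eq]

lemma log_absNorm_eq_sum_count {I : Ideal (𝓞 K)} (hI : I ≠ 0) [DecidableEq (Ideal (𝓞 K))] :
    Real.log (Ideal.absNorm I) = ∑ P ∈ (normalizedFactors I).toFinset,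
      (normalizedFactors I).count P * Real.log (Ideal.absNorm P) := by
  conv_lhs => rw [← Ideal.prod_normalizedFactors_eq_self hI, prod_multiset_count]
  rw [map_prod, Nat.cast_prod, Real.log_prod fun P hP ↦ ?_]
  · simp only [map_pow, Nat.cast_pow, Real.log_pow]
  · have hP := prime_of_normalized_factor P (Multiset.mem_toFinset.1 hP)
    exact Nat.cast_ne_zero.2 (absNorm_pos_of_ne_zero (pow_ne_zero _ hP.ne_zero)).ne'

lemma pow_dvd_iff_le_count {P I : Ideal (𝓞 K)} (hP : Prime P) (hI : I ≠ 0) {k : ℕ}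
    [DecidableEq (Ideal (𝓞 K))] : P ^ k ∣ I ↔ k ≤ (normalizedFactors I).count P := by
  rw [dvd_iff_normalizedFactors_le_normalizedFactors (pow_ne_zero _ hP.ne_zero) hI,
    hP.irreducible.normalizedFactors_pow, Multiset.le_count_iff_replicate_le, normalize_eq]

lemma sum_idealVonMangoldt_of_dvd {x : ℝ} {I : Ideal (𝓞 K)} (hI : I ∈ idealsLE K x)
    [DecidablePred (· ∣ I)] :
    ∑ J ∈ idealsLE K x with J ∣ I, idealVonMangoldt J = Real.log (Ideal.absNorm I) := by
  classical
  obtain ⟨hI, hIx⟩ := mem_idealsLE.1 hI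
  let F := (normalizedFactors I).toFinset.sigma fun P ↦ Icc 1 ((normalizedFactors I).count P)
  have hF {P : Ideal (𝓞 K)} {k : ℕ} : ⟨P, k⟩ ∈ F ↔ Prime P ∧ k ≠ 0 ∧ P ^ k ∣ I := by
    simp only [F, mem_sigma, Multiset.mem_toFinset, mem_Icc, Nat.one_le_iff_ne_zero]
    refine ⟨fun ⟨hP, hk, hkc⟩ ↦ ?_, fun ⟨hP, hk, hkI⟩ ↦ ?_⟩
    · have hP := prime_of_normalized_factor P hP
      exact ⟨hP, hk, (pow_dvd_iff_le_count hP hI).2 hkc⟩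
    · have hkc := (pow_dvd_iff_le_count hP hI).1 hkI
      exact ⟨Multiset.count_pos.1 (by omega), hk, hkc⟩
  have hlog : Real.log (Ideal.absNorm I) = ∑ q ∈ F, Real.log (Ideal.absNorm q.1) := by
    simp [F, log_absNorm_eq_sum_count hI, sum_sigma]
  rw [hlog]
  symm
  refine sum_of_injOn (fun q ↦ q.1 ^ q.2) ?_ ?_ ?_ ?_
  · rintro ⟨P, k⟩ hq ⟨P', k'⟩ hq' (h : P ^ k = P' ^ k')
    obtain ⟨hP, hk, -⟩ := hF.1 hq
    obtain ⟨hP', hk', -⟩ := hF.1 hq'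
    obtain rfl : P = P' := by
      rw [← normalize_eq P, ← radical_pow_of_prime hP hk, h, radical_pow_of_prime hP' hk',
        normalize_eq]
    rw [pow_injective_of_not_isUnit hP.not_isUnit hP.ne_zero h]
  · rintro ⟨P, k⟩ hq
    obtain ⟨hP, -, hkI⟩ := hF.1 hq
    have hle := Nat.le_of_dvd (absNorm_pos_of_ne_zero hI) (map_dvd Ideal.absNorm hkI)
    refine mem_filter.2 ⟨mem_idealsLE.2 ⟨pow_ne_zero _ hP.ne_zero, ?_⟩, hkI⟩
    exact (Nat.cast_le.2 hle).trans hIx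
  · rintro J hJ hJF
    refine if_neg ?_
    rintro ⟨P, k, hP, hk, rfl⟩
    exact hJF ⟨⟨P, k⟩, hF.2 ⟨hP, hk.ne', (mem_filter.1 hJ).2⟩, rfl⟩
  · rintro ⟨P, k⟩ hq
    obtain ⟨hP, hk, -⟩ := hF.1 hq
    exact (idealVonMangoldt_pow hP hk).symm

lemma prod_absNorm_le_pow_finrank {p : ℕ} (hp : p ≠ 0) {s : Finset (Ideal (𝓞 K))}
    (hs : ∀ P ∈ s, Prime P ∧ (p : 𝓞 K) ∈ P) :
    ∏ P ∈ s, Ideal.absNorm P ≤ p ^ Module.finrank ℚ K := by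
  have hdvd : ∏ P ∈ s, P ∣ Ideal.span {(p : 𝓞 K)} :=
    prod_primes_dvd _ (fun P hP ↦ (hs P hP).1) fun P hP ↦ Ideal.dvd_span_singleton.2 (hs P hP).2
  have hN := map_dvd Ideal.absNorm hdvd
  rw [map_prod, Ideal.absNorm_span_natCast, RingOfIntegers.rank K] at hN
  exact Nat.le_of_dvd (pow_pos (Nat.pos_of_ne_zero hp) _) hN

lemma exists_prime_mem_and_absNorm_eq_pow {P : Ideal (𝓞 K)} (hP : Prime P) :
    ∃ p f : ℕ, p.Prime ∧ f ≠ 0 ∧ (p : 𝓞 K) ∈ P ∧ Ideal.absNorm P = p ^ f := by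
  have : P.IsPrime := Ideal.isPrime_of_prime hP
  have : P.IsMaximal := this.isMaximal hP.ne_zero
  obtain ⟨p, f, hf, hpP, hp, hN⟩ := Ideal.exists_prime_and_absNorm_eq_pow P
  exact ⟨p, f, hp, hf.ne', hpP, hN⟩

lemma natCast_mem_radical_of_absNorm_eq_pow {J : Ideal (𝓞 K)} (hJ : IsPrimePow J) {p j : ℕ}
    (hp : p.Prime) (hN : Ideal.absNorm J = p ^ j) :
    Prime (radical J) ∧ (p : 𝓞 K) ∈ radical J := by
  obtain ⟨P, k, hP, hk, rfl⟩ := hJ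
  obtain ⟨p', f, hp', hf, hpP, hNP⟩ := exists_prime_mem_and_absNorm_eq_pow hP
  have hp'p : p' ∣ p ^ j := by
    rw [← hN, map_pow, hNP, ← pow_mul]
    exact dvd_pow_self _ (mul_ne_zero hf hk.ne')
  rw [radical_pow_of_prime hP hk.ne', normalize_eq,
    ← (Nat.prime_dvd_prime_iff_eq hp' hp).1 (hp'.dvd_of_dvd_pow hp'p)]
  exact ⟨hP, hpP⟩

lemma exists_absNorm_eq_prime_pow_of_isPrimePow {J : Ideal (𝓞 K)} (hJ : IsPrimePow J) :
    ∃ p j : ℕ, p.Prime ∧ j ≠ 0 ∧ Ideal.absNorm J = p ^ j := by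
  obtain ⟨P, k, hP, hk, rfl⟩ := hJ
  obtain ⟨p, f, hp, hf, -, hN⟩ := exists_prime_mem_and_absNorm_eq_pow hP
  exact ⟨p, f * k, hp, mul_ne_zero hf hk.ne', by rw [map_pow, hN, pow_mul]⟩

lemma eq_of_radical_eq_of_absNorm_eq {J J' : Ideal (𝓞 K)} (hJ : IsPrimePow J)
    (hJ' : IsPrimePow J') (hrad : radical J = radical J')
    (hN : Ideal.absNorm J = Ideal.absNorm J') : J = J' := by
  obtain ⟨P, k, hP, hk, rfl⟩ := hJ
  obtain ⟨P', k', hP', hk', rfl⟩ := hJ'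
  rw [radical_pow_of_prime hP hk.ne', radical_pow_of_prime hP' hk'.ne', normalize_eq,
    normalize_eq] at hrad
  subst hrad
  rw [map_pow, map_pow] at hN
  rw [Nat.pow_right_injective (one_lt_absNorm_of_prime hP) hN]

-- The prime powers of norm `p ^ j` have distinct radicals, all of them primes above `p`.
lemma sum_idealVonMangoldt_filter_absNorm_le (x : ℝ) (m : ℕ) :
    ∑ J ∈ idealsLE K x with Ideal.absNorm J = m, idealVonMangoldt J ≤
      Module.finrank ℚ K * ArithmeticFunction.vonMangoldt m := by
  classical
  let F := {J ∈ {J ∈ idealsLE K x | Ideal.absNorm J = m} | IsPrimePow J}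
  have hF {J : Ideal (𝓞 K)} (hJ : J ∈ F) : IsPrimePow J ∧ Ideal.absNorm J = m :=
    have ⟨hJ, hpow⟩ := mem_filter.1 hJ
    ⟨hpow, (mem_filter.1 hJ).2⟩
  simp only [idealVonMangoldt, ← sum_filter]
  change ∑ J ∈ F, _ ≤ _
  rcases F.eq_empty_or_nonempty with hempty | ⟨J₀, hJ₀⟩
  · rw [hempty, sum_empty]
    exact mul_nonneg (Nat.cast_nonneg _) ArithmeticFunction.vonMangoldt_nonneg
  obtain ⟨p, j, hp, hj, hm⟩ := exists_absNorm_eq_prime_pow_of_isPrimePow (hF hJ₀).1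
  obtain rfl : m = p ^ j := by rw [← hm, (hF hJ₀).2]
  have hrad {J : Ideal (𝓞 K)} (hJ : J ∈ F) : Prime (radical J) ∧ (p : 𝓞 K) ∈ radical J :=
    natCast_mem_radical_of_absNorm_eq_pow (hF hJ).1 hp (hF hJ).2
  have hinj : Set.InjOn radical (F : Set (Ideal (𝓞 K))) := fun J hJ J' hJ' h ↦
    eq_of_radical_eq_of_absNorm_eq (hF hJ).1 (hF hJ').1 h ((hF hJ).2.trans (hF hJ').2.symm)
  have hpos (J) (hJ : J ∈ F) : 0 < (Ideal.absNorm (radical J) : ℝ) :=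
    mod_cast absNorm_pos_of_ne_zero (hrad hJ).1.ne_zero
  rw [ArithmeticFunction.vonMangoldt_apply_pow hj, ArithmeticFunction.vonMangoldt_apply_prime hp,
    ← Real.log_pow, ← Real.log_prod fun J hJ ↦ (hpos J hJ).ne']
  refine Real.log_le_log (prod_pos hpos) ?_
  rw [← prod_image (f := fun P ↦ (Ideal.absNorm P : ℝ)) hinj]
  exact_mod_cast prod_absNorm_le_pow_finrank hp.ne_zero (forall_mem_image.2 fun _ ↦ hrad)

lemma sum_idealVonMangoldt_mul_le (x : ℝ) {h : ℕ → ℝ} (hh : ∀ m, 0 ≤ h m) :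
    ∑ J ∈ idealsLE K x, idealVonMangoldt J * h (Ideal.absNorm J) ≤
      Module.finrank ℚ K * ∑ m ∈ Ioc 0 ⌊x⌋₊, ArithmeticFunction.vonMangoldt m * h m := by
  have hmaps (J) (hJ : J ∈ idealsLE K x) : Ideal.absNorm J ∈ Ioc 0 ⌊x⌋₊ :=
    have ⟨hJ, hJx⟩ := mem_idealsLE.1 hJ
    mem_Ioc.2 ⟨absNorm_pos_of_ne_zero hJ, Nat.le_floor hJx⟩
  rw [← sum_fiberwise_of_maps_to hmaps, mul_sum]
  refine sum_le_sum fun m _ ↦ ?_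
  rw [sum_congr rfl fun J hJ ↦ by rw [(mem_filter.1 hJ).2], ← sum_mul, ← mul_assoc]
  exact mul_le_mul_of_nonneg_right (sum_idealVonMangoldt_filter_absNorm_le x m) (hh m)

end VonMangoldt

section Mertens

variable (K : Type*) [Field K] [NumberField K]

lemma sum_log_absNorm_eq (x : ℝ) :
    ∑ I ∈ idealsLE K x, Real.log (Ideal.absNorm I) =
      ∑ J ∈ idealsLE K x, idealVonMangoldt J * #(idealsLE K (x / Ideal.absNorm J)) := by
  classical
  calc ∑ I ∈ idealsLE K x, Real.log (Ideal.absNorm I)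
      = ∑ I ∈ idealsLE K x, ∑ J ∈ idealsLE K x with J ∣ I, idealVonMangoldt J :=
        sum_congr rfl fun I hI ↦ (sum_idealVonMangoldt_of_dvd hI).symm
    _ = ∑ J ∈ idealsLE K x, ∑ I ∈ idealsLE K x with J ∣ I, idealVonMangoldt J := by
        simp only [sum_filter]
        exact sum_comm
    _ = ∑ J ∈ idealsLE K x, idealVonMangoldt J * #(idealsLE K (x / Ideal.absNorm J)) := by
        refine sum_congr rfl fun J hJ ↦ ?_
        rw [sum_const, nsmul_eq_mul, mul_comm, card_filter_dvd_idealsLE (mem_idealsLE.1 hJ).1]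

variable {K} in
lemma sum_log_absNorm_le (x : ℝ) :
    ∑ I ∈ idealsLE K x, Real.log (Ideal.absNorm I) ≤ #(idealsLE K x) * Real.log x := by
  rw [← nsmul_eq_mul]
  refine sum_le_card_nsmul _ _ _ fun I hI ↦ ?_
  have ⟨hI, hIx⟩ := mem_idealsLE.1 hI
  exact Real.log_le_log (mod_cast absNorm_pos_of_ne_zero hI) hIx

variable {K} in
lemma le_sum_log_absNorm {x y : ℝ} (hy : 0 < y) (hyx : y ≤ x) :
    (#(idealsLE K x) - #(idealsLE K y)) * Real.log y ≤
      ∑ I ∈ idealsLE K x, Real.log (Ideal.absNorm I) := by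
  have hsub : idealsLE K y ⊆ idealsLE K x := fun I hI ↦
    mem_idealsLE.2 ((mem_idealsLE.1 hI).imp_right (·.trans hyx))
  calc (#(idealsLE K x) - #(idealsLE K y)) * Real.log y
      = #(idealsLE K x \ idealsLE K y) • Real.log y := by
        rw [card_sdiff_of_subset hsub, nsmul_eq_mul, Nat.cast_sub (card_le_card hsub)]
    _ ≤ ∑ I ∈ idealsLE K x \ idealsLE K y, Real.log (Ideal.absNorm I) := by
        refine card_nsmul_le_sum _ _ _ fun I hI ↦ Real.log_le_log hy ?_
        obtain ⟨hIx, hIy⟩ := mem_sdiff.1 hI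
        by_contra! hlt
        exact hIy (mem_idealsLE.2 ⟨(mem_idealsLE.1 hIx).1, hlt.le⟩)
    _ ≤ ∑ I ∈ idealsLE K x, Real.log (Ideal.absNorm I) :=
        sum_le_sum_of_subset_of_nonneg sdiff_subset fun _ _ _ ↦ Real.log_natCast_nonneg _

lemma tendsto_sum_log_absNorm_div :
    Tendsto (fun x : ℝ ↦ (∑ I ∈ idealsLE K x, Real.log (Ideal.absNorm I)) / (x * Real.log x))
      atTop (𝓝 (dedekindZeta_residue K)) := by
  obtain ⟨C, hC⟩ := exists_card_idealsLE_le_mul K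
  have hA := tendsto_card_idealsLE_div K
  have hlog : ∀ᶠ x : ℝ in atTop, 1 < x ∧ 1 ≤ Real.log x :=
    (eventually_gt_atTop 1).and (Real.tendsto_log_atTop.eventually_ge_atTop 1)
  have hlower : Tendsto (fun x : ℝ ↦ (#(idealsLE K x) / x - C / Real.log x) *
      (1 - Real.log (Real.log x) / Real.log x)) atTop (𝓝 (dedekindZeta_residue K)) := by
    have hloglog : Tendsto (fun x : ℝ ↦ Real.log (Real.log x) / Real.log x) atTop (𝓝 0) :=
      Real.isLittleO_log_id_atTop.tendsto_div_nhds_zero.comp Real.tendsto_log_atTop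
    simpa using (hA.sub (Real.tendsto_log_atTop.const_div_atTop C)).mul
      ((tendsto_const_nhds (x := (1 : ℝ))).sub hloglog)
  refine tendsto_of_tendsto_of_tendsto_of_le_of_le' hlower hA ?_ ?_
  · filter_upwards [hlog] with x ⟨hx, hlogx⟩
    have hx0 : 0 < x := by linarith
    have hlogx0 : 0 < Real.log x := by linarith
    have hy : 0 < x / Real.log x := by positivity
    have hlogy : Real.log (x / Real.log x) = Real.log x - Real.log (Real.log x) :=
      Real.log_div hx0.ne' hlogx0.ne'
    have hlogy0 : 0 ≤ Real.log (x / Real.log x) := by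
      have := Real.log_le_sub_one_of_pos hlogx0
      linarith
    rw [le_div_iff₀ (by positivity)]
    calc (#(idealsLE K x) / x - C / Real.log x) *
          (1 - Real.log (Real.log x) / Real.log x) * (x * Real.log x)
        = (#(idealsLE K x) - C * (x / Real.log x)) * Real.log (x / Real.log x) := by
          rw [hlogy]
          field_simp
      _ ≤ (#(idealsLE K x) - #(idealsLE K (x / Real.log x))) * Real.log (x / Real.log x) := by
          gcongr
          exact hC _ hy.le
      _ ≤ ∑ I ∈ idealsLE K x, Real.log (Ideal.absNorm I) :=
          le_sum_log_absNorm hy (div_le_self hx0.le hlogx)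
  · filter_upwards [hlog] with x ⟨hx, hlogx⟩
    rw [← mul_div_mul_right _ x (by linarith : Real.log x ≠ 0)]
    gcongr
    exact sum_log_absNorm_le x

lemma exists_abs_sum_log_absNorm_sub_le {η : ℝ} (hη : 0 < η) :
    ∃ B : ℝ, ∀ x, 0 ≤ x → |∑ I ∈ idealsLE K x, Real.log (Ideal.absNorm I) -
        dedekindZeta_residue K * x * ∑ J ∈ idealsLE K x, idealVonMangoldt J / Ideal.absNorm J| ≤
      η * x * ∑ J ∈ idealsLE K x, idealVonMangoldt J / Ideal.absNorm J + B * x := by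
  obtain ⟨B, hB⟩ := exists_abs_card_idealsLE_sub_le K hη
  have hB0 : 0 ≤ B := by simpa using (abs_nonneg _).trans (hB 0 le_rfl)
  refine ⟨B * (Module.finrank ℚ K * (Real.log 4 + 4)), fun x hx ↦ ?_⟩
  have hpsi : ∑ J ∈ idealsLE K x, idealVonMangoldt J ≤
      Module.finrank ℚ K * ((Real.log 4 + 4) * x) :=
    calc ∑ J ∈ idealsLE K x, idealVonMangoldt J ≤ Module.finrank ℚ K * Chebyshev.psi x := by
          simpa [Chebyshev.psi] using
            sum_idealVonMangoldt_mul_le (K := K) x (h := 1) fun _ ↦ zero_le_one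
      _ ≤ _ := by gcongr; exact Chebyshev.psi_le_const_mul_self hx
  rw [sum_log_absNorm_eq, mul_sum, ← sum_sub_distrib]
  calc |∑ J ∈ idealsLE K x, (idealVonMangoldt J * #(idealsLE K (x / Ideal.absNorm J)) -
        dedekindZeta_residue K * x * (idealVonMangoldt J / Ideal.absNorm J))|
      ≤ ∑ J ∈ idealsLE K x, idealVonMangoldt J * (η * (x / Ideal.absNorm J) + B) := by
        refine (abs_sum_le_sum_abs _ _).trans (sum_le_sum fun J _ ↦ ?_)
        have hJ := idealVonMangoldt_nonneg J
        rw [show idealVonMangoldt J * #(idealsLE K (x / Ideal.absNorm J)) -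
            dedekindZeta_residue K * x * (idealVonMangoldt J / Ideal.absNorm J) =
            idealVonMangoldt J * (#(idealsLE K (x / Ideal.absNorm J)) -
              dedekindZeta_residue K * (x / Ideal.absNorm J)) by ring, abs_mul, abs_of_nonneg hJ]
        exact mul_le_mul_of_nonneg_left (hB _ (by positivity)) hJ
    _ = η * x * ∑ J ∈ idealsLE K x, idealVonMangoldt J / Ideal.absNorm J +
          B * ∑ J ∈ idealsLE K x, idealVonMangoldt J := by
        rw [mul_sum, mul_sum, ← sum_add_distrib]
        exact sum_congr rfl fun J _ ↦ by ring
    _ ≤ _ := by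
        have := mul_le_mul_of_nonneg_left hpsi hB0
        linarith

lemma tendsto_one_of_forall_abs_sub_mul_le {α : Type*} {l : Filter α} {τ m : α → ℝ} {κ : ℝ}
    (hκ : 0 < κ) (hτ : Tendsto τ l (𝓝 κ))
    (h : ∀ η > 0, ∀ᶠ x in l, |τ x - κ * m x| ≤ η * (m x + 1)) : Tendsto m l (𝓝 1) := by
  have hbdd : ∀ᶠ x in l, m x + 1 ≤ (2 * κ + κ) / (κ / 2) + 1 := by
    filter_upwards [h (κ / 2) (by positivity), hτ.eventually_le_const (by linarith : κ < 2 * κ)]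
      with x hx hτx
    have := (abs_le.1 hx).1
    rw [add_le_add_iff_right, le_div_iff₀ (by positivity)]
    nlinarith
  have hdiff : Tendsto (fun x ↦ τ x - κ * m x) l (𝓝 0) := by
    refine Metric.tendsto_nhds.2 fun ε hε ↦ ?_
    have hD : 0 < (2 * κ + κ) / (κ / 2) + 1 := by positivity
    filter_upwards [hbdd, h (ε / 2 / ((2 * κ + κ) / (κ / 2) + 1)) (by positivity)] with x hD' hx
    rw [Real.dist_0_eq_abs]
    refine (hx.trans (mul_le_mul_of_nonneg_left hD' (by positivity))).trans_lt ?_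
    rw [div_mul_cancel₀ _ hD.ne']
    exact half_lt_self hε
  have hm := (hτ.sub hdiff).div_const κ
  rw [sub_zero, div_self hκ.ne'] at hm
  exact hm.congr fun x ↦ by field_simp; ring

lemma tendsto_sum_idealVonMangoldt_div_log :
    Tendsto (fun x : ℝ ↦
      (∑ J ∈ idealsLE K x, idealVonMangoldt J / Ideal.absNorm J) / Real.log x) atTop (𝓝 1) := by
  refine tendsto_one_of_forall_abs_sub_mul_le (dedekindZeta_residue_pos K)
    (tendsto_sum_log_absNorm_div K) fun η hη ↦ ?_
  obtain ⟨B, hB⟩ := exists_abs_sum_log_absNorm_sub_le K hη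
  filter_upwards [eventually_gt_atTop 1, Real.tendsto_log_atTop.eventually_ge_atTop (B / η)]
    with x hx hlogB
  have hlog := Real.log_pos hx
  have hx0 : 0 < x := by linarith
  have hxlog : 0 < x * Real.log x := by positivity
  rw [div_le_iff₀' hη] at hlogB
  rw [← mul_le_mul_iff_of_pos_right hxlog, ← abs_of_pos hxlog, ← abs_mul, abs_of_pos hxlog]
  set M := ∑ J ∈ idealsLE K x, idealVonMangoldt J / Ideal.absNorm J
  calc |((∑ I ∈ idealsLE K x, Real.log (Ideal.absNorm I)) / (x * Real.log x) -
        dedekindZeta_residue K * (M / Real.log x)) * (x * Real.log x)|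
      = |∑ I ∈ idealsLE K x, Real.log (Ideal.absNorm I) - dedekindZeta_residue K * x * M| := by
        congr 1
        field_simp
    _ ≤ η * x * M + B * x := hB x hx0.le
    _ ≤ η * x * M + η * Real.log x * x := by gcongr
    _ = η * (M / Real.log x + 1) * (x * Real.log x) := by
        field_simp

end Mertens

section DegreeOnePrimes

variable (K : Type*) [Field K] [NumberField K]

lemma exists_sum_idealVonMangoldt_not_prime_le : ∃ D : ℝ, ∀ x,
    ∑ J ∈ idealsLE K x with ¬ (Ideal.absNorm J).Prime,
      idealVonMangoldt J / Ideal.absNorm J ≤ D := by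
  let h (m : ℕ) : ℝ := if m.Prime then 0 else (m : ℝ)⁻¹
  have hh (m : ℕ) : 0 ≤ h m := by
    simp only [h]
    split_ifs <;> positivity
  have hsum : Summable fun m ↦ ArithmeticFunction.vonMangoldt m * h m := by
    refine (ArithmeticFunction.vonMangoldt.summable_residueClass_non_primes_div
      (q := 1) 0).congr fun m ↦ ?_
    have hm : (m : ZMod 1) = 0 := Subsingleton.elim _ _
    by_cases hp : m.Prime <;>
      simp [h, hp, hm, ArithmeticFunction.vonMangoldt.residueClass, div_eq_mul_inv]
  refine ⟨Module.finrank ℚ K * ∑' m, ArithmeticFunction.vonMangoldt m * h m, fun x ↦ ?_⟩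
  calc ∑ J ∈ idealsLE K x with ¬ (Ideal.absNorm J).Prime, idealVonMangoldt J / Ideal.absNorm J
      = ∑ J ∈ idealsLE K x, idealVonMangoldt J * h (Ideal.absNorm J) := by
        rw [sum_filter]
        refine sum_congr rfl fun J _ ↦ ?_
        by_cases hp : (Ideal.absNorm J).Prime <;> simp [h, hp, div_eq_mul_inv]
    _ ≤ Module.finrank ℚ K * ∑ m ∈ Ioc 0 ⌊x⌋₊, ArithmeticFunction.vonMangoldt m * h m :=
        sum_idealVonMangoldt_mul_le x hh
    _ ≤ _ := by
        gcongr
        exact hsum.sum_le_tsum _ fun m _ ↦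
          mul_nonneg ArithmeticFunction.vonMangoldt_nonneg (hh m)

/-- The prime numbers in `(x, y]` which are norms of ideals of `K`. -/
noncomputable def primeNorms (x y : ℝ) : Finset ℕ :=
  {J ∈ idealsLE K y | x < Ideal.absNorm J ∧ (Ideal.absNorm J).Prime}.image Ideal.absNorm

variable {K}

lemma sum_idealVonMangoldt_prime_le {x y : ℝ} (hx : 0 < x) :
    ∑ J ∈ idealsLE K y with x < Ideal.absNorm J ∧ (Ideal.absNorm J).Prime,
        idealVonMangoldt J / Ideal.absNorm J ≤
      Module.finrank ℚ K * (#(primeNorms K x y) * (Real.log y / x)) := by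
  let h (m : ℕ) : ℝ := if m ∈ primeNorms K x y then (m : ℝ)⁻¹ else 0
  have hh (m : ℕ) : 0 ≤ h m := by
    simp only [h]
    split_ifs <;> positivity
  calc ∑ J ∈ idealsLE K y with x < Ideal.absNorm J ∧ (Ideal.absNorm J).Prime,
        idealVonMangoldt J / Ideal.absNorm J
      = ∑ J ∈ idealsLE K y with x < Ideal.absNorm J ∧ (Ideal.absNorm J).Prime,
          idealVonMangoldt J * h (Ideal.absNorm J) := by
        refine sum_congr rfl fun J hJ ↦ ?_
        rw [show h (Ideal.absNorm J) = _ from if_pos (mem_image_of_mem _ hJ), div_eq_mul_inv]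
    _ ≤ ∑ J ∈ idealsLE K y, idealVonMangoldt J * h (Ideal.absNorm J) :=
        sum_le_sum_of_subset_of_nonneg (filter_subset _ _) fun J _ _ ↦
          mul_nonneg (idealVonMangoldt_nonneg J) (hh _)
    _ ≤ Module.finrank ℚ K * ∑ m ∈ Ioc 0 ⌊y⌋₊, ArithmeticFunction.vonMangoldt m * h m :=
        sum_idealVonMangoldt_mul_le y hh
    _ = Module.finrank ℚ K * ∑ m ∈ Ioc 0 ⌊y⌋₊ with m ∈ primeNorms K x y,
          ArithmeticFunction.vonMangoldt m * (m : ℝ)⁻¹ := by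
        simp only [h, mul_ite, mul_zero, sum_filter]
    _ ≤ Module.finrank ℚ K * ∑ _ ∈ primeNorms K x y, Real.log y / x := by
        gcongr ?_ * ?_
        refine (sum_le_sum_of_subset_of_nonneg (fun _ hm ↦ (mem_filter.1 hm).2) fun _ _ _ ↦
          mul_nonneg ArithmeticFunction.vonMangoldt_nonneg (by positivity)).trans
          (sum_le_sum fun m hm ↦ ?_)
        obtain ⟨J, hJ, rfl⟩ := mem_image.1 hm
        obtain ⟨hJy, hxJ, -⟩ := mem_filter.1 hJ
        rw [← div_eq_mul_inv]
        refine div_le_div₀ (Real.log_nonneg ?_) (ArithmeticFunction.vonMangoldt_le_log.trans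
          (Real.log_le_log (hx.trans hxJ) (mem_idealsLE.1 hJy).2)) hx hxJ.le
        exact le_trans (mod_cast absNorm_pos_of_ne_zero (mem_idealsLE.1 hJy).1)
          (mem_idealsLE.1 hJy).2
    _ = _ := by rw [sum_const, nsmul_eq_mul]

lemma exists_primes_of_primeNorms (x y : ℝ) : ∃ s : Finset (Ideal (𝓞 K)),
    (∀ P ∈ s, (Ideal.absNorm P).Prime ∧ x < Ideal.absNorm P ∧ Ideal.absNorm P ≤ y) ∧
      Set.InjOn Ideal.absNorm (s : Set (Ideal (𝓞 K))) ∧ #s = #(primeNorms K x y) := by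
  let t : Finset (Ideal (𝓞 K)) := {J ∈ idealsLE K y | x < Ideal.absNorm J ∧ (Ideal.absNorm J).Prime}
  obtain ⟨s, hs, hinj, himage⟩ :=
    exists_subset_injOn_image_eq_of_surjOn (t : Set (Ideal (𝓞 K))) (t.image Ideal.absNorm)
      (by rw [Set.SurjOn, coe_image])
  refine ⟨s, fun P hP ↦ ?_, hinj, ?_⟩
  · obtain ⟨hPy, hxP, hp⟩ := mem_filter.1 (hs hP)
    exact ⟨hp, hxP, (mem_idealsLE.1 hPy).2⟩
  · rw [primeNorms, ← himage, card_image_of_injOn hinj]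

variable (K)

lemma eventually_mul_log_le_sum_sub {η : ℝ} (hη : 0 < η) : ∀ᶠ x : ℝ in atTop,
    η / 2 * Real.log x ≤ ∑ J ∈ idealsLE K (x ^ (1 + η)), idealVonMangoldt J / Ideal.absNorm J -
      ∑ J ∈ idealsLE K x, idealVonMangoldt J / Ideal.absNorm J := by
  have hM := tendsto_sum_idealVonMangoldt_div_log K
  have hlim := ((hM.comp (tendsto_rpow_atTop (by positivity : 0 < 1 + η))).mul_const (1 + η)).sub hM
  filter_upwards [hlim.eventually_const_le (by linarith : η / 2 < 1 * (1 + η) - 1),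
    eventually_gt_atTop 1] with x hx hx1
  have hlog := Real.log_pos hx1
  rw [Function.comp_apply, Real.log_rpow (by linarith), ← mul_le_mul_iff_of_pos_right hlog] at hx
  refine hx.trans_eq ?_
  have : 1 + η ≠ 0 := by positivity
  field_simp

lemma exists_sum_idealVonMangoldt_div_sub_le : ∃ D : ℝ, ∀ x y, 0 < x →
    ∑ J ∈ idealsLE K y, idealVonMangoldt J / Ideal.absNorm J -
        ∑ J ∈ idealsLE K x, idealVonMangoldt J / Ideal.absNorm J ≤
      D + Module.finrank ℚ K * (#(primeNorms K x y) * (Real.log y / x)) := by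
  classical
  obtain ⟨D, hD⟩ := exists_sum_idealVonMangoldt_not_prime_le K
  refine ⟨D, fun x y hx ↦ ?_⟩
  have hpos (J : Ideal (𝓞 K)) : 0 ≤ idealVonMangoldt J / Ideal.absNorm J :=
    div_nonneg (idealVonMangoldt_nonneg J) (Nat.cast_nonneg _)
  have hunion (s t : Finset (Ideal (𝓞 K))) :
      ∑ J ∈ s ∪ t, idealVonMangoldt J / Ideal.absNorm J ≤
        ∑ J ∈ s, idealVonMangoldt J / Ideal.absNorm J +
          ∑ J ∈ t, idealVonMangoldt J / Ideal.absNorm J := by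
    rw [← sum_union_inter]
    exact le_add_of_nonneg_right (sum_nonneg fun J _ ↦ hpos J)
  have hcover : idealsLE K y ⊆ idealsLE K x ∪
      ({J ∈ idealsLE K y | ¬ (Ideal.absNorm J).Prime} ∪
        {J ∈ idealsLE K y | x < Ideal.absNorm J ∧ (Ideal.absNorm J).Prime}) := by
    intro J hJ
    have hJ0 := (mem_idealsLE.1 hJ).1
    simp only [mem_union, mem_filter, mem_idealsLE (x := x), hJ, ← not_le]
    tauto
  have hle := (sum_le_sum_of_subset_of_nonneg hcover fun J _ _ ↦ hpos J).trans
    ((hunion _ _).trans (add_le_add_right (hunion _ _) _))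
  linarith [hD y, sum_idealVonMangoldt_prime_le (K := K) (y := y) hx]

lemma exists_eventually_mul_le_card_primeNorms {η : ℝ} (hη : 0 < η) :
    ∃ c > 0, ∀ᶠ x : ℝ in atTop, c * x ≤ #(primeNorms K x (x ^ (1 + η))) := by
  obtain ⟨D, hD⟩ := exists_sum_idealVonMangoldt_div_sub_le K
  have hn : (0 : ℝ) < Module.finrank ℚ K := mod_cast Module.finrank_pos
  refine ⟨η / 4 / (Module.finrank ℚ K * (1 + η)), by positivity, ?_⟩
  filter_upwards [eventually_mul_log_le_sum_sub K hη, eventually_gt_atTop 1,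
    Real.tendsto_log_atTop.eventually_ge_atTop (D / (η / 4))] with x hsum hx hlogD
  have hx0 : 0 < x := by linarith
  have hlog := Real.log_pos hx
  have hle := hD x (x ^ (1 + η)) hx0
  rw [div_le_iff₀ (by positivity)] at hlogD
  rw [Real.log_rpow hx0] at hle
  have hmain : η / 4 * Real.log x ≤ Module.finrank ℚ K *
      (#(primeNorms K x (x ^ (1 + η))) * ((1 + η) * Real.log x / x)) := by linarith
  rw [div_mul_eq_mul_div, div_le_iff₀ (by positivity), ← mul_le_mul_iff_of_pos_right hlog]
  calc η / 4 * x * Real.log x = η / 4 * Real.log x * x := by ring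
    _ ≤ _ := mul_le_mul_of_nonneg_right hmain hx0.le
    _ = _ := by field_simp

lemma exists_eventually_degreeOnePrimes {η : ℝ} (hη : 0 < η) :
    ∃ c > 0, ∀ᶠ x : ℝ in atTop, ∃ s : Finset (Ideal (𝓞 K)),
      (∀ P ∈ s, (Ideal.absNorm P).Prime ∧ x < Ideal.absNorm P ∧
        Ideal.absNorm P ≤ x ^ (1 + η)) ∧
      Set.InjOn Ideal.absNorm (s : Set (Ideal (𝓞 K))) ∧ c * x ≤ #s := by
  obtain ⟨c, hc, hcount⟩ := exists_eventually_mul_le_card_primeNorms K hη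
  refine ⟨c, hc, hcount.mono fun x hx ↦ ?_⟩
  obtain ⟨s, hs, hinj, hcard⟩ := exists_primes_of_primeNorms (K := K) x (x ^ (1 + η))
  exact ⟨s, hs, hinj, hcard ▸ hx⟩

end DegreeOnePrimes

section PrimeSupported

variable {M : Type*} [CommMonoidWithZero M] [Nontrivial M]

/-- The monoid of nonzero elements all of whose prime divisors lie in `A`. Only the primes in `A`
matter, so `A` may be any set. -/
def primeSupported [NoZeroDivisors M] (A : Set M) : Submonoid M where
  carrier := {x | x ≠ 0 ∧ ∀ p, Prime p → p ∣ x → p ∈ A}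
  one_mem' := ⟨one_ne_zero, fun _ hp h ↦ (hp.not_dvd_one h).elim⟩
  mul_mem' := fun ⟨hx, hxA⟩ ⟨hy, hyA⟩ ↦
    ⟨mul_ne_zero hx hy, fun p hp h ↦ (hp.dvd_or_dvd h).elim (hxA p hp) (hyA p hp)⟩

lemma primeSupported_mono [NoZeroDivisors M] {A B : Set M} (h : A ⊆ B) :
    primeSupported A ≤ primeSupported B :=
  fun _ hx ↦ ⟨hx.1, fun p hp hpx ↦ h (hx.2 p hp hpx)⟩

lemma mem_primeSupported_of_prime [IsCancelMulZero M] [Subsingleton Mˣ] {p : M} (hp : Prime p)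
    {A : Set M} (hpA : p ∈ A) : p ∈ primeSupported A :=
  ⟨hp.ne_zero, fun _ hq hqp ↦ associated_iff_eq.1 (hq.associated_of_dvd hp hqp) ▸ hpA⟩

lemma exists_mul_eq_primeSupported_compl [UniqueFactorizationMonoid M] [Subsingleton Mˣ]
    (A : Set M) {x : M} (hx : x ≠ 0) :
    ∃ a ∈ primeSupported A, ∃ b ∈ primeSupported Aᶜ, a * b = x := by
  induction x using UniqueFactorizationMonoid.induction_on_prime with
  | h₁ => exact (hx rfl).elim
  | h₂ u hu => exact ⟨1, one_mem _, 1, one_mem _, by rw [isUnit_iff_eq_one.1 hu, one_mul]⟩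
  | h₃ x p hx0 hp ih =>
    obtain ⟨a, ha, b, hb, rfl⟩ := ih hx0
    by_cases hpA : p ∈ A
    · exact ⟨p * a, mul_mem (mem_primeSupported_of_prime hp hpA) ha, b, hb, mul_assoc p a b⟩
    · exact ⟨a, ha, p * b, mul_mem (mem_primeSupported_of_prime hp hpA) hb, mul_left_comm a p b⟩

lemma exists_pow_mul_eq_of_mem_primeSupported_insert [UniqueFactorizationMonoid M]
    {A : Set M} {p : M} (hp : Prime p) {x : M} (hx : x ∈ primeSupported (insert p A)) :
    ∃ v, ∃ y ∈ primeSupported A, p ^ v * y = x := by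
  obtain ⟨y, hxy, hpy⟩ :=
    (FiniteMultiplicity.of_prime_left hp hx.1).exists_eq_pow_mul_and_not_dvd
  refine ⟨_, y, ⟨fun h ↦ hpy (h ▸ dvd_zero p), fun q hq hqy ↦ ?_⟩, hxy.symm⟩
  refine (hx.2 q hq (hxy ▸ hqy.mul_left _)).resolve_left ?_
  rintro rfl
  exact hpy hqy

end PrimeSupported

section PartialZeta

variable {K : Type*} [Field K] [NumberField K]

/-- The term `N(J)^{-r}` of the Dedekind zeta function. For `r ≠ 0` it vanishes at `J = 0`. -/
noncomputable def dirichletTerm (r : ℝ) (J : Ideal (𝓞 K)) : ℝ := (Ideal.absNorm J : ℝ) ^ (-r)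

lemma dirichletTerm_nonneg (r : ℝ) (J : Ideal (𝓞 K)) : 0 ≤ dirichletTerm r J :=
  Real.rpow_nonneg (Nat.cast_nonneg _) _

lemma dirichletTerm_one (r : ℝ) : dirichletTerm r (1 : Ideal (𝓞 K)) = 1 := by
  simp [dirichletTerm]

lemma dirichletTerm_zero {r : ℝ} (hr : r ≠ 0) : dirichletTerm r (0 : Ideal (𝓞 K)) = 0 := by
  simp [dirichletTerm, Real.zero_rpow (neg_ne_zero.2 hr)]

lemma dirichletTerm_mul (r : ℝ) (I J : Ideal (𝓞 K)) :
    dirichletTerm r (I * J) = dirichletTerm r I * dirichletTerm r J := by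
  simp only [dirichletTerm, map_mul, Nat.cast_mul]
  exact Real.mul_rpow (Nat.cast_nonneg _) (Nat.cast_nonneg _)

lemma sum_Icc_card_filter_absNorm_eq (n : ℕ) :
    ∑ m ∈ Icc 1 n, #{J ∈ idealsLE K m | Ideal.absNorm J = m} = #(idealsLE K n) := by
  rw [card_eq_sum_card_fiberwise (f := Ideal.absNorm) (t := Icc 1 n) fun J hJ ↦ ?_]
  · refine sum_congr rfl fun m hm ↦ congrArg card (ext fun J ↦ ?_)
    have hmn : (m : ℝ) ≤ n := mod_cast (mem_Icc.1 hm).2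
    simp only [mem_filter, mem_idealsLE, and_congr_left_iff]
    rintro rfl
    simp [hmn]
  · have ⟨hJ, hJn⟩ := mem_idealsLE.1 hJ
    exact mem_coe.2 (mem_Icc.2 ⟨absNorm_pos_of_ne_zero hJ, mod_cast hJn⟩)

lemma sum_dirichletTerm_filter_absNorm_le {r : ℝ} (hr : r ≠ 0) (s : Finset (Ideal (𝓞 K)))
    (m : ℕ) : ∑ J ∈ s with Ideal.absNorm J = m, dirichletTerm r J ≤
      #{J ∈ idealsLE K m | Ideal.absNorm J = m} * (m : ℝ) ^ (-r) := by
  rcases eq_or_ne m 0 with rfl | hm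
  · refine (sum_nonpos fun J hJ ↦ ?_).trans (by positivity)
    rw [Ideal.absNorm_eq_zero_iff.1 (mem_filter.1 hJ).2]
    exact (dirichletTerm_zero hr).le
  · rw [sum_congr rfl fun J hJ ↦ show dirichletTerm r J = (m : ℝ) ^ (-r) by
      rw [dirichletTerm, (mem_filter.1 hJ).2], sum_const, nsmul_eq_mul]
    refine mul_le_mul_of_nonneg_right (Nat.cast_le.2 (card_le_card fun J hJ ↦ ?_)) (by positivity)
    have hJm : Ideal.absNorm J = m := (mem_filter.1 hJ).2
    refine mem_filter.2 ⟨mem_idealsLE.2 ⟨fun h ↦ hm ?_, hJm ▸ le_rfl⟩, hJm⟩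
    rw [← hJm, Ideal.absNorm_eq_zero_iff.2 h]

lemma summable_dirichletTerm {r : ℝ} (hr : 1 < r) :
    Summable (dirichletTerm r : Ideal (𝓞 K) → ℝ) := by
  let f (m : ℕ) : ℝ := #{J ∈ idealsLE K m | Ideal.absNorm J = m}
  have hO : (fun n : ℕ ↦ ∑ m ∈ Icc 1 n, f m) =O[atTop] fun n : ℕ ↦ (n : ℝ) ^ (1 : ℝ) := by
    obtain ⟨C, hC⟩ := exists_card_idealsLE_le_mul K
    refine .of_bound C (.of_forall fun n ↦ ?_)
    rw [← Nat.cast_sum, sum_Icc_card_filter_absNorm_eq, Real.rpow_one, Real.norm_natCast,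
      Real.norm_natCast]
    exact hC n n.cast_nonneg
  have hsum : Summable fun m : ℕ ↦ f m * (m : ℝ) ^ (-r) := by
    refine (LSeriesSummable_of_sum_norm_bigO_and_nonneg hO (fun _ ↦ Nat.cast_nonneg _)
      zero_le_one (s := r) (by simpa using hr)).norm.congr fun m ↦ ?_
    rw [LSeries.norm_term_eq]
    split_ifs with hm
    · simp [hm, Real.zero_rpow (by linarith : -r ≠ 0)]
    · simp [f, Real.rpow_neg, div_eq_mul_inv]
  refine summable_of_sum_le (c := ∑' m, f m * (m : ℝ) ^ (-r)) (dirichletTerm_nonneg r) fun s ↦ ?_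
  calc ∑ J ∈ s, dirichletTerm r J
      = ∑ m ∈ s.image Ideal.absNorm, ∑ J ∈ s with Ideal.absNorm J = m, dirichletTerm r J :=
        (sum_fiberwise_of_maps_to (fun _ ↦ mem_image_of_mem _) _).symm
    _ ≤ ∑ m ∈ s.image Ideal.absNorm, f m * (m : ℝ) ^ (-r) :=
        sum_le_sum fun m _ ↦ sum_dirichletTerm_filter_absNorm_le (by linarith) s m
    _ ≤ ∑' m, f m * (m : ℝ) ^ (-r) := hsum.sum_le_tsum _ fun m _ ↦ by positivity

/-- The part `∑_{J ∈ A} N(J)^{-r}` of the Dedekind zeta function carried by a set `A` of ideals. -/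
noncomputable def partialZeta (r : ℝ) (A : Set (Ideal (𝓞 K))) : ℝ :=
  ∑' J : A, dirichletTerm r (J : Ideal (𝓞 K))

lemma partialZeta_nonneg (r : ℝ) (A : Set (Ideal (𝓞 K))) : 0 ≤ partialZeta r A :=
  tsum_nonneg fun _ ↦ dirichletTerm_nonneg r _

lemma partialZeta_coe (r : ℝ) (s : Finset (Ideal (𝓞 K))) :
    partialZeta r (s : Set (Ideal (𝓞 K))) = ∑ J ∈ s, dirichletTerm r J :=
  s.tsum_subtype' _

lemma partialZeta_singleton (r : ℝ) (J : Ideal (𝓞 K)) :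
    partialZeta r {J} = dirichletTerm r J :=
  tsum_singleton J _

lemma partialZeta_mono {r : ℝ} (hr : 1 < r) {A B : Set (Ideal (𝓞 K))} (h : A ⊆ B) :
    partialZeta r A ≤ partialZeta r B :=
  ((summable_dirichletTerm hr).subtype A).tsum_le_tsum_of_inj (Set.inclusion h)
    (Set.inclusion_injective h) (fun _ _ ↦ dirichletTerm_nonneg r _) (fun _ ↦ le_rfl)
    ((summable_dirichletTerm hr).subtype B)

lemma partialZeta_union_of_disjoint {r : ℝ} (hr : 1 < r) {A B : Set (Ideal (𝓞 K))}
    (h : Disjoint A B) : partialZeta r (A ∪ B) = partialZeta r A + partialZeta r B :=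
  ((summable_dirichletTerm hr).subtype A).tsum_union_disjoint h
    ((summable_dirichletTerm hr).subtype B)

lemma partialZeta_union_le {r : ℝ} (hr : 1 < r) (A B : Set (Ideal (𝓞 K))) :
    partialZeta r (A ∪ B) ≤ partialZeta r A + partialZeta r B := by
  rw [← Set.union_sdiff_self, partialZeta_union_of_disjoint hr Set.disjoint_sdiff_right]
  exact add_le_add_right (partialZeta_mono hr Set.sdiff_subset) _

lemma partialZeta_le_rpow_mul {s r : ℝ} (hs : 1 < s) (hsr : s ≤ r) {q : ℝ} (hq : 0 < q)
    {A : Set (Ideal (𝓞 K))} (hA : ∀ J ∈ A, q ≤ Ideal.absNorm J) :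
    partialZeta r A ≤ q ^ (s - r) * partialZeta s (Set.univ : Set (Ideal (𝓞 K))) := by
  have hsum (t : ℝ) (ht : 1 < t) : Summable fun J : A ↦ dirichletTerm t (J : Ideal (𝓞 K)) :=
    (summable_dirichletTerm ht).subtype A
  have hterm (J : A) : dirichletTerm r J.1 ≤ q ^ (s - r) * dirichletTerm s J.1 := by
    have hJ := hq.trans_le (hA J J.2)
    calc dirichletTerm r J.1 = (Ideal.absNorm J.1 : ℝ) ^ (s - r) * dirichletTerm s J.1 := by
          rw [dirichletTerm, dirichletTerm, ← Real.rpow_add hJ]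
          congr 1
          ring
      _ ≤ q ^ (s - r) * dirichletTerm s J.1 :=
          mul_le_mul_of_nonneg_right
            (Real.rpow_le_rpow_of_nonpos hq (hA J J.2) (by linarith)) (dirichletTerm_nonneg _ _)
  calc partialZeta r A ≤ q ^ (s - r) * partialZeta s A := by
        rw [partialZeta, partialZeta, ← tsum_mul_left]
        exact (hsum r (hs.trans_le hsr)).tsum_le_tsum hterm ((hsum s hs).mul_left _)
    _ ≤ q ^ (s - r) * partialZeta s Set.univ := by
        gcongr
        exact partialZeta_mono hs (Set.subset_univ A)

end PartialZeta

section DivisorSum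

lemma bijective_mul_of_isRelPrime {M : Type*} [CommMonoidWithZero M] [IsCancelMulZero M]
    [Subsingleton Mˣ] [DecompositionMonoid M] {a b : M} (hab : IsRelPrime a b) :
    Function.Bijective fun x : {d // d ∣ a} × {d // d ∣ b} ↦
      (⟨x.1 * x.2, mul_dvd_mul x.1.2 x.2.2⟩ : {d // d ∣ a * b}) := by
  have dvd_of_eq {x y : {d // d ∣ a} × {d // d ∣ b}} (h : (x.1 * x.2 : M) = y.1 * y.2) :
      (x.1 : M) ∣ y.1 ∧ (x.2 : M) ∣ y.2 :=
    ⟨((hab.of_dvd_left x.1.2).of_dvd_right y.2.2).dvd_of_dvd_mul_right (h ▸ dvd_mul_right _ _),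
      ((hab.of_dvd_left y.1.2).of_dvd_right x.2.2).symm.dvd_of_dvd_mul_left (h ▸ dvd_mul_left _ _)⟩
  refine ⟨fun x y hxy ↦ ?_, fun ⟨d, hd⟩ ↦ ?_⟩
  · have h := congrArg Subtype.val hxy
    exact Prod.ext
      (Subtype.ext (dvd_antisymm (dvd_of_eq h).1 (dvd_of_eq h.symm).1))
      (Subtype.ext (dvd_antisymm (dvd_of_eq h).2 (dvd_of_eq h.symm).2))
  · obtain ⟨d₁, d₂, h₁, h₂, rfl⟩ := exists_dvd_and_dvd_of_dvd_mul hd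
    exact ⟨⟨⟨d₁, h₁⟩, ⟨d₂, h₂⟩⟩, rfl⟩

variable {K : Type*} [Field K] [NumberField K] {r : ℝ}

lemma sigmaK_eq_partialZeta (r : ℝ) (I : Ideal (𝓞 K)) :
    sigmaK K r I = partialZeta r {J | J ∣ I} := rfl

lemma sigmaK_le_of_dvd (hr : 1 < r) {I J : Ideal (𝓞 K)} (h : I ∣ J) :
    sigmaK K r I ≤ sigmaK K r J :=
  partialZeta_mono hr fun D (hD : D ∣ I) ↦ hD.trans h

lemma sigmaK_one (r : ℝ) : sigmaK K r (1 : Ideal (𝓞 K)) = 1 := by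
  rw [sigmaK_eq_partialZeta, ← dirichletTerm_one (K := K) r, ← partialZeta_singleton]
  exact congrArg _ (Set.ext fun J ↦ isUnit_iff_dvd_one.symm.trans isUnit_iff_eq_one)

lemma one_le_sigmaK (hr : 1 < r) (I : Ideal (𝓞 K)) : 1 ≤ sigmaK K r I :=
  (sigmaK_one r).ge.trans (sigmaK_le_of_dvd hr (one_dvd I))

lemma sigmaK_le_partialZeta_univ (hr : 1 < r) (I : Ideal (𝓞 K)) :
    sigmaK K r I ≤ partialZeta r (Set.univ : Set (Ideal (𝓞 K))) :=
  partialZeta_mono hr (Set.subset_univ _)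

lemma sum_dirichletTerm_le_sigmaK (hr : 1 < r) {I : Ideal (𝓞 K)} {s : Finset (Ideal (𝓞 K))}
    (hs : ∀ J ∈ s, J ∣ I) : ∑ J ∈ s, dirichletTerm r J ≤ sigmaK K r I := by
  rw [← partialZeta_coe]
  exact partialZeta_mono hr hs

lemma sigmaK_le_one_add_partialZeta (hr : 1 < r) {q : ℕ} {I : Ideal (𝓞 K)}
    (hI : I ∈ primeSupported {P | q < Ideal.absNorm P}) :
    sigmaK K r I ≤ 1 + partialZeta r {J : Ideal (𝓞 K) | q < Ideal.absNorm J} := by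
  rw [← dirichletTerm_one (K := K) r, ← partialZeta_singleton]
  refine (partialZeta_mono hr fun J hJ ↦ ?_).trans (partialZeta_union_le hr _ _)
  refine or_iff_not_imp_left.2 fun hJ1 ↦ ?_
  have hJ0 : J ≠ 0 := ne_zero_of_dvd_ne_zero hI.1 hJ
  obtain ⟨P, hP, hPJ⟩ := WfDvdMonoid.exists_irreducible_factor (mt isUnit_iff_eq_one.1 hJ1) hJ0
  exact (hI.2 P hP.prime (hPJ.trans hJ)).trans_le
    (Nat.le_of_dvd (absNorm_pos_of_ne_zero hJ0) (map_dvd Ideal.absNorm hPJ))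

lemma tendsto_partialZeta_setOf_lt_absNorm (hr : 1 < r) :
    Tendsto (fun q : ℕ ↦ partialZeta r {J : Ideal (𝓞 K) | q < Ideal.absNorm J}) atTop (𝓝 0) := by
  obtain ⟨s, hs, hsr⟩ := exists_between hr
  have hlim : Tendsto (fun q : ℕ ↦ (q : ℝ) ^ (s - r)) atTop (𝓝 0) := by
    simpa [Function.comp_def] using
      (tendsto_rpow_neg_atTop (sub_pos.2 hsr)).comp tendsto_natCast_atTop_atTop
  refine squeeze_zero' (.of_forall fun _ ↦ partialZeta_nonneg r _) ?_
    (by simpa using hlim.mul_const (partialZeta s (Set.univ : Set (Ideal (𝓞 K)))))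
  filter_upwards [eventually_gt_atTop 0] with q hq
  exact partialZeta_le_rpow_mul hs hsr.le (Nat.cast_pos.2 hq) fun J hJ ↦ Nat.cast_le.2 (le_of_lt hJ)

lemma sigmaK_pow_succ_le (hr : 1 < r) {P : Ideal (𝓞 K)} (hP : Prime P) (v : ℕ) :
    sigmaK K r (P ^ (v + 1)) ≤ (1 + dirichletTerm r P) * sigmaK K r (P ^ v) := by
  have hterm : dirichletTerm r (P ^ v) ≤ sigmaK K r (P ^ v) := by
    simpa using sum_dirichletTerm_le_sigmaK hr (s := {P ^ v}) (by simp)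
  have hunion : {J | J ∣ P ^ (v + 1)} ⊆ {J | J ∣ P ^ v} ∪ {P ^ (v + 1)} := fun J hJ ↦ by
    obtain ⟨i, hi, hJi⟩ := (dvd_prime_pow hP _).1 hJ
    obtain rfl := associated_iff_eq.1 hJi
    rcases hi.lt_or_eq with hi | rfl
    · exact .inl (pow_dvd_pow P (Nat.lt_succ_iff.1 hi))
    · exact .inr rfl
  calc sigmaK K r (P ^ (v + 1)) ≤ sigmaK K r (P ^ v) + dirichletTerm r (P ^ (v + 1)) := by
        rw [← partialZeta_singleton]
        exact (partialZeta_mono hr hunion).trans (partialZeta_union_le hr _ _)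
    _ = sigmaK K r (P ^ v) + dirichletTerm r P * dirichletTerm r (P ^ v) := by
        rw [pow_succ', dirichletTerm_mul]
    _ ≤ sigmaK K r (P ^ v) + dirichletTerm r P * sigmaK K r (P ^ v) := by
        gcongr
        exact dirichletTerm_nonneg r P
    _ = (1 + dirichletTerm r P) * sigmaK K r (P ^ v) := by ring

lemma sigmaK_mul_of_isRelPrime (hr : 1 < r) {I J : Ideal (𝓞 K)} (hIJ : IsRelPrime I J) :
    sigmaK K r (I * J) = sigmaK K r I * sigmaK K r J := by
  have hI := (summable_dirichletTerm hr).subtype {D | D ∣ I}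
  have hJ := (summable_dirichletTerm hr).subtype {D | D ∣ J}
  have hprod := hI.mul_of_nonneg hJ (fun _ ↦ dirichletTerm_nonneg r _)
    (fun _ ↦ dirichletTerm_nonneg r _)
  refine .trans ?_ (hI.tsum_mul_tsum hJ hprod).symm
  refine ((Equiv.ofBijective _ (bijective_mul_of_isRelPrime hIJ)).tsum_eq _).symm.trans ?_
  exact tsum_congr fun x ↦ dirichletTerm_mul r _ _

lemma sigmaK_mul_of_mem_primeSupported (hr : 1 < r) {A B : Set (Ideal (𝓞 K))}
    (hAB : Disjoint A B) {I J : Ideal (𝓞 K)} (hI : I ∈ primeSupported A)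
    (hJ : J ∈ primeSupported B) : sigmaK K r (I * J) = sigmaK K r I * sigmaK K r J :=
  sigmaK_mul_of_isRelPrime hr <|
    (UniqueFactorizationMonoid.isRelPrime_iff_no_prime_factors hI.1).2 fun P hPI hPJ hP ↦
      hAB.notMem_of_mem_left (hI.2 P hP hPI) (hJ.2 P hP hPJ)

end DivisorSum

section IntervalFilling

variable {K : Type*} [Field K] [NumberField K] {r : ℝ}

lemma one_add_sum_dirichletTerm_le_sigmaK_prod (hr : 1 < r) {s : Finset (Ideal (𝓞 K))}
    (hs : ∀ P ∈ s, Prime P) :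
    1 + ∑ P ∈ s, dirichletTerm r P ≤ sigmaK K r (∏ P ∈ s, P) := by
  classical
  have h1 : (1 : Ideal (𝓞 K)) ∉ s := fun h ↦ (hs 1 h).ne_one rfl
  rw [← dirichletTerm_one (K := K) r, ← sum_insert h1]
  refine sum_dirichletTerm_le_sigmaK hr fun J hJ ↦ ?_
  rcases mem_insert.1 hJ with rfl | hJ
  · exact one_dvd _
  · exact dvd_prod_of_mem _ hJ

variable (K) in
lemma eventually_exists_one_add_rpow_le_sigmaK (hr : 1 < r) :
    ∀ᶠ q : ℕ in atTop, ∃ J ∈ primeSupported {P : Ideal (𝓞 K) | q < Ideal.absNorm P},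
      1 + (q : ℝ) ^ (-r) ≤ sigmaK K r J := by
  have hr0 : 0 < r := by linarith
  obtain ⟨c, hc, hprimes⟩ := exists_eventually_degreeOnePrimes K (η := 1 / (2 * r)) (by positivity)
  filter_upwards [tendsto_natCast_atTop_atTop.eventually hprimes, eventually_gt_atTop 0,
    ((tendsto_rpow_atTop one_half_pos).comp
      tendsto_natCast_atTop_atTop).eventually_ge_atTop c⁻¹] with q ⟨s, hs, _, hcard⟩ hq hqc
  have hq : (0 : ℝ) < q := mod_cast hq
  rw [Function.comp_apply, inv_le_iff_one_le_mul₀' hc] at hqc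
  have hprime (P) (hP : P ∈ s) : Prime P := prime_of_prime_absNorm (hs P hP).1
  refine ⟨∏ P ∈ s, P, prod_mem fun P hP ↦ mem_primeSupported_of_prime (hprime P hP) <|
    Nat.cast_lt.1 (hs P hP).2.1, ?_⟩
  refine le_trans ?_ (one_add_sum_dirichletTerm_le_sigmaK_prod hr hprime)
  have hexp : ((q : ℝ) ^ (1 + 1 / (2 * r))) ^ (-r) = (q : ℝ) ^ (-(1 / 2) : ℝ) * (q : ℝ) ^ (-r) := by
    rw [← Real.rpow_mul hq.le, ← Real.rpow_add hq]
    congr 1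
    field_simp
    ring
  have hhalf : (q : ℝ) * (q : ℝ) ^ (-(1 / 2) : ℝ) = (q : ℝ) ^ (1 / 2 : ℝ) := by
    rw [← Real.rpow_one_add' hq.le (by norm_num)]
    norm_num
  gcongr 1 + ?_
  calc (q : ℝ) ^ (-r) ≤ c * (q : ℝ) ^ (1 / 2 : ℝ) * (q : ℝ) ^ (-r) :=
        le_mul_of_one_le_left (by positivity) hqc
    _ = c * q * ((q : ℝ) ^ (1 + 1 / (2 * r))) ^ (-r) := by rw [hexp, ← hhalf]; ring
    _ ≤ #s * ((q : ℝ) ^ (1 + 1 / (2 * r))) ^ (-r) := by gcongr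
    _ ≤ ∑ P ∈ s, dirichletTerm r P := by
        rw [← nsmul_eq_mul]
        refine card_nsmul_le_sum _ _ _ fun P hP ↦ ?_
        exact Real.rpow_le_rpow_of_nonpos (hq.trans (hs P hP).2.1) (hs P hP).2.2 (by linarith)

lemma exists_sigmaK_pow_le_lt_mul (hr : 1 < r) {A : Set (Ideal (𝓞 K))} {P : Ideal (𝓞 K)}
    (hP : Prime P) (hPA : P ∉ A)
    (hbig : ∃ J ∈ primeSupported A, 1 + dirichletTerm r P ≤ sigmaK K r J) {t : ℝ} (ht : 1 ≤ t)
    (htA : ∃ J ∈ primeSupported (insert P A), t < sigmaK K r J) :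
    ∃ v : ℕ, sigmaK K r (P ^ v) ≤ t ∧
      ∃ J ∈ primeSupported A, t < sigmaK K r (P ^ v) * sigmaK K r J := by
  classical
  have hex : ∃ v : ℕ, ∃ J ∈ primeSupported A, t < sigmaK K r (P ^ v) * sigmaK K r J := by
    obtain ⟨I, hI, htJ⟩ := htA
    obtain ⟨v, J, hJ, rfl⟩ := exists_pow_mul_eq_of_mem_primeSupported_insert hP hI
    refine ⟨v, J, hJ, ?_⟩
    rwa [sigmaK_mul_of_mem_primeSupported hr (Set.disjoint_singleton_left.2 hPA)
      (pow_mem (mem_primeSupported_of_prime hP (Set.mem_singleton P)) v) hJ] at htJ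
  obtain ⟨v, hv, hmin⟩ := Nat.findX hex
  refine ⟨v, ?_, hv⟩
  rcases v with _ | v
  · rwa [pow_zero, sigmaK_one]
  · by_contra! hlt
    -- Already the exponent `v` would do: the ideal `J` makes up for the loss of a factor `P`.
    obtain ⟨J, hJ, hPJ⟩ := hbig
    refine hmin v v.lt_succ_self ⟨J, hJ, hlt.trans_le ?_⟩
    calc sigmaK K r (P ^ (v + 1)) ≤ (1 + dirichletTerm r P) * sigmaK K r (P ^ v) :=
          sigmaK_pow_succ_le hr hP v
      _ ≤ sigmaK K r J * sigmaK K r (P ^ v) := by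
          gcongr
          linarith [one_le_sigmaK hr (P ^ v)]
      _ = sigmaK K r (P ^ v) * sigmaK K r J := mul_comm _ _

lemma exists_sigmaK_le_lt_mul (hr : 1 < r) {A : Set (Ideal (𝓞 K))} (S : Finset (Ideal (𝓞 K)))
    (hS : ∀ P ∈ S, Prime P ∧ P ∉ A ∧
      ∃ J ∈ primeSupported (A ∪ {Q | Q ∈ S ∧ Ideal.absNorm P < Ideal.absNorm Q}),
        1 + dirichletTerm r P ≤ sigmaK K r J)
    {t : ℝ} (ht : 1 ≤ t) (htA : ∃ J ∈ primeSupported (A ∪ S), t < sigmaK K r J) :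
    ∃ J₀ ∈ primeSupported (S : Set (Ideal (𝓞 K))), sigmaK K r J₀ ≤ t ∧
      ∃ J₁ ∈ primeSupported A, t < sigmaK K r J₀ * sigmaK K r J₁ := by
  classical
  -- The primes are treated in order of increasing norm.
  induction S using Finset.induction_on_min_value (Ideal.absNorm (S := 𝓞 K)) generalizing t with
  | empty =>
    obtain ⟨J, hJ, htJ⟩ := htA
    exact ⟨1, one_mem _, by rwa [sigmaK_one], J, by simpa using hJ, by rwa [sigmaK_one, one_mul]⟩
  | insert P S hPS hmin ih =>
    obtain ⟨hP, hPA, J, hJ, hPJ⟩ := hS P (mem_insert_self P S)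
    have hJS : J ∈ primeSupported (A ∪ S) :=
      primeSupported_mono (Set.union_subset_union_right A fun Q hQ ↦ mem_coe.2 <|
        (mem_insert.1 hQ.1).resolve_left (ne_of_apply_ne _ hQ.2.ne')) hJ
    obtain ⟨v, hv, hvt⟩ := exists_sigmaK_pow_le_lt_mul hr hP (by simp [hPA, hPS]) ⟨J, hJS, hPJ⟩ ht
      (by rwa [coe_insert, Set.union_insert] at htA)
    have hpos : 0 < sigmaK K r (P ^ v) := by linarith [one_le_sigmaK hr (P ^ v)]
    obtain ⟨J₀, hJ₀, hJ₀t, J₁, hJ₁, hJ₁t⟩ := ih (t := t / sigmaK K r (P ^ v))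
      (fun Q hQ ↦ ⟨(hS Q (mem_insert_of_mem hQ)).1, (hS Q (mem_insert_of_mem hQ)).2.1, by
        obtain ⟨J, hJ, hQJ⟩ := (hS Q (mem_insert_of_mem hQ)).2.2
        refine ⟨J, primeSupported_mono (Set.union_subset_union_right A fun R hR ↦ ?_) hJ, hQJ⟩
        refine ⟨(mem_insert.1 hR.1).resolve_left ?_, hR.2⟩
        rintro rfl
        exact (hmin Q hQ).not_gt hR.2⟩)
      ((one_le_div hpos).2 hv) (by simpa only [div_lt_iff₀' hpos] using hvt)
    have hmul : sigmaK K r (P ^ v * J₀) = sigmaK K r (P ^ v) * sigmaK K r J₀ :=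
      sigmaK_mul_of_mem_primeSupported hr (Set.disjoint_singleton_left.2 (mem_coe.not.2 hPS))
        (pow_mem (mem_primeSupported_of_prime hP (Set.mem_singleton P)) v) hJ₀
    refine ⟨P ^ v * J₀, mul_mem (pow_mem (mem_primeSupported_of_prime hP (by simp)) v)
      (primeSupported_mono (by simp) hJ₀), ?_, J₁, hJ₁, ?_⟩
    · rwa [hmul, ← le_div_iff₀' hpos]
    · rwa [hmul, mul_assoc, ← div_lt_iff₀' hpos]

lemma exists_sigmaK_le_lt_mul_of_forall_lt (hr : 1 < r) {q₀ : ℕ}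
    (hbig : ∀ q > q₀, ∃ J ∈ primeSupported {P : Ideal (𝓞 K) | q < Ideal.absNorm P},
      1 + (q : ℝ) ^ (-r) ≤ sigmaK K r J)
    {t : ℝ} (ht : 1 ≤ t)
    (hJt : ∃ J ∈ primeSupported {P : Ideal (𝓞 K) | q₀ < Ideal.absNorm P}, t < sigmaK K r J)
    (q : ℕ) :
    ∃ J₀ ∈ primeSupported {P : Ideal (𝓞 K) | q₀ < Ideal.absNorm P}, sigmaK K r J₀ ≤ t ∧
      ∃ J₁ ∈ primeSupported {P : Ideal (𝓞 K) | q < Ideal.absNorm P},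
        t < sigmaK K r J₀ * sigmaK K r J₁ := by
  have hfin : {P : Ideal (𝓞 K) | Prime P ∧ q₀ < Ideal.absNorm P ∧ Ideal.absNorm P ≤ q}.Finite :=
    (Ideal.finite_setOfPred_absNorm_le q).subset fun P hP ↦ hP.2.2
  let S := hfin.toFinset
  have hle {n : ℕ} (hn : q₀ ≤ n) :
      primeSupported {P : Ideal (𝓞 K) | n < Ideal.absNorm P} ≤
        primeSupported ({P | q < Ideal.absNorm P} ∪ {P | P ∈ S ∧ n < Ideal.absNorm P}) := by
    refine fun J hJ ↦ ⟨hJ.1, fun P hP hPJ ↦ or_iff_not_imp_left.2 fun hPq ↦ ?_⟩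
    have hnP := hJ.2 P hP hPJ
    exact ⟨hfin.mem_toFinset.2 ⟨hP, hn.trans_lt hnP, not_lt.1 hPq⟩, hnP⟩
  have hS (P) (hP : P ∈ S) : Prime P ∧ P ∉ {P : Ideal (𝓞 K) | q < Ideal.absNorm P} ∧
      ∃ J ∈ primeSupported ({P | q < Ideal.absNorm P} ∪
        {Q | Q ∈ S ∧ Ideal.absNorm P < Ideal.absNorm Q}), 1 + dirichletTerm r P ≤ sigmaK K r J := by
    obtain ⟨hprime, hqP, hPq⟩ := hfin.mem_toFinset.1 hP
    obtain ⟨I, hI, hPI⟩ := hbig _ hqP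
    exact ⟨hprime, hPq.not_gt, I, hle hqP.le hI, hPI⟩
  obtain ⟨J, hJ, htJ⟩ := hJt
  obtain ⟨J₀, hJ₀, hJ₀t, hJ₁⟩ := exists_sigmaK_le_lt_mul hr S hS ht
    ⟨J, primeSupported_mono (Set.union_subset_union_right _ fun P hP ↦ hP.1) (hle le_rfl hJ), htJ⟩
  exact ⟨J₀, primeSupported_mono (fun P hP ↦ (hfin.mem_toFinset.1 hP).2.1) hJ₀, hJ₀t, hJ₁⟩

lemma Icc_sigmaK_subset_closure (hr : 1 < r) {q₀ : ℕ}
    (hbig : ∀ q > q₀, ∃ J ∈ primeSupported {P : Ideal (𝓞 K) | q < Ideal.absNorm P},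
      1 + (q : ℝ) ^ (-r) ≤ sigmaK K r J)
    {I : Ideal (𝓞 K)} (hI : I ∈ primeSupported {P | q₀ < Ideal.absNorm P}ᶜ)
    {J : Ideal (𝓞 K)} (hJ : J ∈ primeSupported {P | q₀ < Ideal.absNorm P})
    (hJ1 : 1 < sigmaK K r J) :
    Set.Icc (sigmaK K r I) (sigmaK K r I * sigmaK K r J) ⊆
      closure (sigmaK K r '' {I : Ideal (𝓞 K) | I ≠ 0}) := by
  have hpos (D : Ideal (𝓞 K)) : 0 < sigmaK K r D := by linarith [one_le_sigmaK hr D]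
  rw [← closure_Ico (lt_mul_of_one_lt_right (hpos I) hJ1).ne]
  refine closure_minimal (fun t ht ↦ ?_) isClosed_closure
  have happrox (q : ℕ) :
      ∃ D : Ideal (𝓞 K), D ≠ 0 ∧
        t / (1 + partialZeta r {J : Ideal (𝓞 K) | q < Ideal.absNorm J}) ≤ sigmaK K r D ∧
        sigmaK K r D ≤ t := by
    obtain ⟨J₀, hJ₀, hJ₀t, J₁, hJ₁, hJ₁t⟩ := exists_sigmaK_le_lt_mul_of_forall_lt hr hbig
      ((one_le_div (hpos I)).2 ht.1) ⟨J, hJ, (div_lt_iff₀' (hpos I)).2 ht.2⟩ q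
    have hmul := sigmaK_mul_of_mem_primeSupported hr disjoint_compl_left hI hJ₀
    rw [le_div_iff₀' (hpos I), ← hmul] at hJ₀t
    rw [div_lt_iff₀' (hpos I), ← mul_assoc, ← hmul] at hJ₁t
    refine ⟨I * J₀, mul_ne_zero hI.1 hJ₀.1, ?_, hJ₀t⟩
    rw [div_le_iff₀ (by linarith [partialZeta_nonneg r {J : Ideal (𝓞 K) | q < Ideal.absNorm J}])]
    exact hJ₁t.le.trans
      (mul_le_mul_of_nonneg_left (sigmaK_le_one_add_partialZeta hr hJ₁) (hpos _).le)
  choose D hD0 hDle hDt using happrox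
  have hlim : Tendsto (fun q : ℕ ↦ t / (1 + partialZeta r {J : Ideal (𝓞 K) | q < Ideal.absNorm J}))
      atTop (𝓝 t) := by
    simpa [Pi.div_def] using (tendsto_const_nhds (x := t)).div
      ((tendsto_partialZeta_setOf_lt_absNorm hr).const_add 1) (by simp)
  exact mem_closure_of_tendsto (tendsto_of_tendsto_of_tendsto_of_le_of_le hlim tendsto_const_nhds
    hDle hDt) (.of_forall fun q ↦ ⟨D q, hD0 q, rfl⟩)

end IntervalFilling

section ConnectedComponents

lemma finite_connectedComponents_of_dense {X : Type*} [TopologicalSpace X] {S T : Set X}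
    (hS : Dense S) (hT : T.Finite)
    (h : ∀ x ∈ S, ∃ y ∈ T, (y : ConnectedComponents X) = x) : Finite (ConnectedComponents X) := by
  have hfin : ((↑) '' S : Set (ConnectedComponents X)).Finite :=
    (hT.image _).subset (Set.image_subset_iff.2 h)
  have hdense : Dense ((↑) '' S : Set (ConnectedComponents X)) :=
    ConnectedComponents.surjective_coe.denseRange.dense_image ConnectedComponents.continuous_coe hS
  rw [← Set.finite_univ_iff, ← hdense.closure_eq, hfin.isClosed.closure_eq]
  exact hfin

lemma finite_connectedComponents_closure {S : Set ℝ} (hS : Bornology.IsBounded S) {δ : ℝ}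
    (hδ : 0 < δ) (h : ∀ x ∈ S, ∃ a b, x ∈ Set.Icc a b ∧ a + δ ≤ b ∧ Set.Icc a b ⊆ closure S) :
    Finite (ConnectedComponents ↥(closure S)) := by
  let T : Set ↥(closure S) := {y | ∃ n : ℤ, (y : ℝ) = zmultiplesHom ℝ δ n}
  have hT : T.Finite := by
    have hmul := ((Int.tendsto_zmultiplesHom_cofinite hδ.ne').eventually
      hS.isCompact_closure.compl_mem_cocompact)
    refine .of_finite_image ((hmul.image (zmultiplesHom ℝ δ)).subset ?_)
      Subtype.val_injective.injOn
    rintro _ ⟨y, ⟨n, hn⟩, rfl⟩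
    exact ⟨n, fun hy ↦ hy (hn ▸ y.2), hn.symm⟩
  have hdense : Dense ((↑) ⁻¹' S : Set ↥(closure S)) := by
    simp [Subtype.dense_iff, Set.inter_eq_right.2 subset_closure]
  refine finite_connectedComponents_of_dense hdense hT fun x hx ↦ ?_
  obtain ⟨a, b, hxab, hab, hsub⟩ := h x hx
  have hn : ⌈a / δ⌉ * δ ∈ Set.Icc a b := by
    have h₁ := (div_le_iff₀ hδ).1 (Int.le_ceil (a / δ))
    have h₂ := mul_lt_mul_of_pos_right (Int.ceil_lt_add_one (a / δ)) hδ
    rw [add_mul, div_mul_cancel₀ _ hδ.ne'] at h₂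
    exact ⟨h₁, by linarith⟩
  refine ⟨⟨_, hsub hn⟩, ⟨⌈a / δ⌉, by simp⟩, ?_⟩
  have hconn : IsPreconnected ((↑) ⁻¹' Set.Icc a b : Set ↥(closure S)) := by
    rw [← Topology.IsInducing.subtypeVal.isPreconnected_image,
      Subtype.image_preimage_coe, Set.inter_eq_right.2 hsub]
    exact isPreconnected_Icc
  exact ConnectedComponents.coe_eq_coe'.2
    (hconn.subset_connectedComponent hxab hn)

lemma eq_of_mem_connectedComponent_closure_image {X ι V : Type*} [PseudoMetricSpace X] {f : ι → X}
    {S : Set ι} {v : ι → V} {δ : ℝ} (hδ : 0 < δ)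
    (h : ∀ i ∈ S, ∀ j ∈ S, dist (f i) (f j) < δ → v i = v j) {i j : ι} (hi : i ∈ S) (hj : j ∈ S)
    (hij : (⟨f i, subset_closure (Set.mem_image_of_mem f hi)⟩ : ↥(closure (f '' S))) ∈
      connectedComponent ⟨f j, subset_closure (Set.mem_image_of_mem f hj)⟩) :
    v i = v j := by
  have happrox (x : ↥(closure (f '' S))) : ∃ k ∈ S, dist (x : X) (f k) < δ / 3 := by
    obtain ⟨_, ⟨k, hk, rfl⟩, hd⟩ := Metric.mem_closure_iff.1 x.2 (δ / 3) (by positivity)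
    exact ⟨k, hk, hd⟩
  choose c hcS hc using happrox
  have hconst : IsLocallyConstant (v ∘ c) := by
    refine (IsLocallyConstant.iff_eventually_eq _).2 fun x ↦ ?_
    filter_upwards [Metric.ball_mem_nhds x (by positivity : 0 < δ / 3)] with y hy
    refine h _ (hcS y) _ (hcS x) ?_
    have hyx : dist (y : X) x < δ / 3 := hy
    have hyc := hc y
    rw [dist_comm] at hyc
    linarith [hc x, dist_triangle4 (f (c y)) y x (f (c x))]
  have hv {k : ι} (hk : k ∈ S) :
      v (c ⟨f k, subset_closure (Set.mem_image_of_mem f hk)⟩) = v k := by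
    refine (h k hk _ (hcS _) ((hc ⟨f k, _⟩).trans (by linarith))).symm
  rw [← hv hi, ← hv hj]
  exact hconst.apply_eq_of_isPreconnected isPreconnected_connectedComponent hij
    mem_connectedComponent

end ConnectedComponents

section FiniteComponents

variable (K : Type*) [Field K] [NumberField K] {r : ℝ}

lemma finite_connectedComponents_closure_sigmaK (hr : 1 < r) :
    Finite (ConnectedComponents ↥(closure (sigmaK K r '' {I : Ideal (𝓞 K) | I ≠ 0}))) := by
  obtain ⟨q₀, hq₀⟩ := eventually_atTop.1
    ((eventually_exists_one_add_rpow_le_sigmaK K hr).and (eventually_gt_atTop 0))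
  obtain ⟨⟨J₀, hJ₀, hJ₀σ⟩, hq₀pos⟩ := hq₀ q₀ le_rfl
  have hδ : 0 < (q₀ : ℝ) ^ (-r) := Real.rpow_pos_of_pos (Nat.cast_pos.2 hq₀pos) _
  have hbdd : Bornology.IsBounded (sigmaK K r '' {I : Ideal (𝓞 K) | I ≠ 0}) := by
    refine (Metric.isBounded_Icc 1 (partialZeta r (Set.univ : Set (Ideal (𝓞 K))))).subset ?_
    rintro _ ⟨I, -, rfl⟩
    exact ⟨one_le_sigmaK hr I, sigmaK_le_partialZeta_univ hr I⟩
  refine finite_connectedComponents_closure hbdd hδ ?_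
  rintro _ ⟨_, hI, rfl⟩
  obtain ⟨I₁, hI₁, I₀, hI₀, rfl⟩ :=
    exists_mul_eq_primeSupported_compl {P : Ideal (𝓞 K) | q₀ < Ideal.absNorm P} hI
  obtain ⟨J, hJ, hI₁J, hJ₀J⟩ : ∃ J ∈ primeSupported {P : Ideal (𝓞 K) | q₀ < Ideal.absNorm P},
      sigmaK K r I₁ ≤ sigmaK K r J ∧ sigmaK K r J₀ ≤ sigmaK K r J :=
    (le_total (sigmaK K r I₁) (sigmaK K r J₀)).elim (fun h ↦ ⟨J₀, hJ₀, h, le_rfl⟩)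
      fun h ↦ ⟨I₁, hI₁, le_rfl, h⟩
  have hI₀σ := one_le_sigmaK hr I₀
  refine ⟨sigmaK K r I₀, sigmaK K r I₀ * sigmaK K r J,
    ⟨sigmaK_le_of_dvd hr (dvd_mul_left _ _), ?_⟩, by nlinarith,
    Icc_sigmaK_subset_closure hr (fun q hq ↦ (hq₀ q hq.le).1) hI₀ hJ (by linarith)⟩
  rw [sigmaK_mul_of_mem_primeSupported hr disjoint_compl_right hI₁ hI₀, mul_comm]
  gcongr

end FiniteComponents

section DivisorCount

variable {K : Type*} [Field K] [NumberField K] {r : ℝ}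

/-- The number of divisors of norm `m` of an ideal, that is, the coefficient of `m^{-r}` in its
divisor sum. -/
noncomputable def divisorCount (I : Ideal (𝓞 K)) (m : ℕ) : ℕ :=
  {D : Ideal (𝓞 K) | D ∣ I ∧ Ideal.absNorm D = m}.ncard

lemma finite_setOf_dvd_absNorm_eq (I : Ideal (𝓞 K)) (m : ℕ) :
    {D : Ideal (𝓞 K) | D ∣ I ∧ Ideal.absNorm D = m}.Finite :=
  (Ideal.finite_setOfPred_absNorm_le m).subset fun _ hD ↦ hD.2.le

lemma partialZeta_setOf_dvd_absNorm_eq (r : ℝ) (I : Ideal (𝓞 K)) (m : ℕ) :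
    partialZeta r {D : Ideal (𝓞 K) | D ∣ I ∧ Ideal.absNorm D = m} =
      divisorCount I m * (m : ℝ) ^ (-r) := by
  have hfin := finite_setOf_dvd_absNorm_eq I m
  rw [divisorCount, Set.ncard_eq_toFinset_card _ hfin, ← nsmul_eq_mul, ← sum_const]
  conv_lhs => rw [← hfin.coe_toFinset, partialZeta_coe]
  refine sum_congr rfl fun D hD ↦ ?_
  rw [dirichletTerm, (hfin.mem_toFinset.1 hD).2]

lemma partialZeta_setOf_dvd_lt_absNorm_succ (hr : 1 < r) (I : Ideal (𝓞 K)) (k : ℕ) :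
    partialZeta r {D : Ideal (𝓞 K) | D ∣ I ∧ k < Ideal.absNorm D} =
      divisorCount I (k + 1) * ((k + 1 : ℕ) : ℝ) ^ (-r) +
        partialZeta r {D : Ideal (𝓞 K) | D ∣ I ∧ k + 1 < Ideal.absNorm D} := by
  rw [← partialZeta_setOf_dvd_absNorm_eq, ← partialZeta_union_of_disjoint hr]
  · congr 1
    ext D
    simp only [Set.mem_ofPred_eq, Set.mem_union, ← and_or_left, and_congr_right_iff]
    omega
  · exact Set.disjoint_left.2 fun D hD hD' ↦ hD'.2.ne' hD.2

lemma sigmaK_eq_sum_divisorCount_add (hr : 1 < r) {I : Ideal (𝓞 K)} (hI : I ≠ 0) (k : ℕ) :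
    sigmaK K r I = ∑ m ∈ range k, divisorCount I (m + 1) * ((m + 1 : ℕ) : ℝ) ^ (-r) +
      partialZeta r {D : Ideal (𝓞 K) | D ∣ I ∧ k < Ideal.absNorm D} := by
  induction k with
  | zero =>
    rw [range_zero, sum_empty, zero_add, sigmaK_eq_partialZeta]
    congr 1
    ext D
    exact ⟨fun hD ↦ ⟨hD, absNorm_pos_of_ne_zero (ne_zero_of_dvd_ne_zero hI hD)⟩, fun hD ↦ hD.1⟩
  | succ k ih =>
    rw [ih, partialZeta_setOf_dvd_lt_absNorm_succ hr, sum_range_succ, add_assoc]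

/-- At the exponent `r`, the ideals of norm larger than `k` contribute at most half of `k^{-r}` to
a divisor sum, for every `1 ≤ k ≤ n`. This makes the numbers of divisors of norm at most `n`
readable from the divisor sum, one norm after the other. -/
def HasSmallTails (K : Type*) [Field K] [NumberField K] (r : ℝ) (n : ℕ) : Prop :=
  ∀ k ∈ Icc 1 n, partialZeta r {D : Ideal (𝓞 K) | k < Ideal.absNorm D} ≤ (k : ℝ) ^ (-r) / 2

lemma sigmaK_add_le_of_divisorCount_lt (hr : 1 < r) {n k : ℕ} (hn : HasSmallTails K r n)
    (hk : k < n) {I J : Ideal (𝓞 K)} (hI : I ≠ 0) (hJ : J ≠ 0)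
    (heq : ∀ m < k, divisorCount I (m + 1) = divisorCount J (m + 1))
    (hlt : divisorCount I (k + 1) < divisorCount J (k + 1)) :
    sigmaK K r I + (n : ℝ) ^ (-r) / 2 ≤ sigmaK K r J := by
  have hI' := sigmaK_eq_sum_divisorCount_add hr hI (k + 1)
  have hJ' := sigmaK_eq_sum_divisorCount_add hr hJ (k + 1)
  rw [sum_range_succ] at hI' hJ'
  rw [sum_congr rfl fun m hm ↦ by rw [heq m (mem_range.1 hm)]] at hI'
  have htail : partialZeta r {D : Ideal (𝓞 K) | D ∣ I ∧ k + 1 < Ideal.absNorm D} ≤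
      ((k + 1 : ℕ) : ℝ) ^ (-r) / 2 :=
    (partialZeta_mono hr fun D hD ↦ hD.2).trans (hn (k + 1) (mem_Icc.2 ⟨by omega, hk⟩))
  have hpow : (n : ℝ) ^ (-r) ≤ ((k + 1 : ℕ) : ℝ) ^ (-r) :=
    Real.rpow_le_rpow_of_nonpos (by positivity) (mod_cast hk) (by linarith)
  have hcount : ((divisorCount I (k + 1) : ℝ) + 1) * ((k + 1 : ℕ) : ℝ) ^ (-r) ≤
      divisorCount J (k + 1) * ((k + 1 : ℕ) : ℝ) ^ (-r) := by
    gcongr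
    exact_mod_cast hlt
  linarith [partialZeta_nonneg r {D : Ideal (𝓞 K) | D ∣ J ∧ k + 1 < Ideal.absNorm D}]

lemma divisorCount_eq_of_dist_lt (hr : 1 < r) {n : ℕ} (hn : HasSmallTails K r n)
    {I J : Ideal (𝓞 K)} (hI : I ≠ 0) (hJ : J ≠ 0)
    (hIJ : dist (sigmaK K r I) (sigmaK K r J) < (n : ℝ) ^ (-r) / 2) {k : ℕ} (hk : k < n) :
    divisorCount I (k + 1) = divisorCount J (k + 1) := by
  induction k using Nat.strong_induction_on with
  | _ k ih =>
    have heq (m) (hm : m < k) := ih m hm (hm.trans hk)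
    rw [Real.dist_eq, abs_lt] at hIJ
    rcases lt_trichotomy (divisorCount I (k + 1)) (divisorCount J (k + 1)) with h | h | h
    · linarith [sigmaK_add_le_of_divisorCount_lt hr hn hk hI hJ heq h]
    · exact h
    · linarith [sigmaK_add_le_of_divisorCount_lt hr hn hk hJ hI (fun m hm ↦ (heq m hm).symm) h]

lemma divisorCount_prod_ne_zero_iff {s t : Finset (Ideal (𝓞 K))}
    (hs : ∀ P ∈ s, (Ideal.absNorm P).Prime) (hinj : Set.InjOn Ideal.absNorm (s : Set (Ideal (𝓞 K))))
    (hts : t ⊆ s) {P : Ideal (𝓞 K)} (hP : P ∈ s) :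
    divisorCount (∏ Q ∈ t, Q) (Ideal.absNorm P) ≠ 0 ↔ P ∈ t := by
  rw [divisorCount, ← Nat.pos_iff_ne_zero, Set.ncard_pos (finite_setOf_dvd_absNorm_eq _ _)]
  refine ⟨fun ⟨D, hD, hDP⟩ ↦ ?_, fun h ↦ ⟨P, dvd_prod_of_mem _ h, rfl⟩⟩
  have hDprime : Prime D := prime_of_prime_absNorm (hDP ▸ hs P hP)
  obtain ⟨Q, hQ, hDQ⟩ := hDprime.exists_mem_finset_dvd hD
  obtain rfl : D = Q := associated_iff_eq.1
    (hDprime.associated_of_dvd (prime_of_prime_absNorm (hs Q (hts hQ))) hDQ)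
  exact hinj (hts hQ) hP hDP ▸ hQ

end DivisorCount

section ComponentBound

variable {K : Type*} [Field K] [NumberField K] {r : ℝ}

lemma two_pow_card_le_card_connectedComponents (hr : 1 < r) {n : ℕ} (hnpos : 0 < n)
    (hn : HasSmallTails K r n) {s : Finset (Ideal (𝓞 K))}
    (hs : ∀ P ∈ s, (Ideal.absNorm P).Prime ∧ Ideal.absNorm P ≤ n)
    (hinj : Set.InjOn Ideal.absNorm (s : Set (Ideal (𝓞 K)))) :
    2 ^ #s ≤ Nat.card (ConnectedComponents
      ↥(closure (sigmaK K r '' {I : Ideal (𝓞 K) | I ≠ 0}))) := by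
  have hfin := finite_connectedComponents_closure_sigmaK K hr
  have hprod (t : s.powerset) : ∏ P ∈ t.1, P ≠ 0 := prod_ne_zero_iff.2 fun P hP ↦
    (prime_of_prime_absNorm (hs P (mem_powerset.1 t.2 hP)).1).ne_zero
  rw [← card_powerset, ← Nat.card_eq_finsetCard]
  refine Nat.card_le_card_of_injective (fun t : s.powerset ↦ ConnectedComponents.mk
    ⟨sigmaK K r (∏ P ∈ t.1, P), subset_closure (Set.mem_image_of_mem _ (hprod t))⟩)
    fun t u htu ↦ ?_
  have hcount : (fun k : Fin n ↦ divisorCount (∏ P ∈ t.1, P) (k + 1)) =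
      fun k : Fin n ↦ divisorCount (∏ P ∈ u.1, P) (k + 1) :=
    eq_of_mem_connectedComponent_closure_image
      (v := fun I (k : Fin n) ↦ divisorCount I (k + 1))
      (half_pos (Real.rpow_pos_of_pos (Nat.cast_pos.2 hnpos) (-r)))
      (fun I hI J hJ hIJ ↦ funext fun k ↦ divisorCount_eq_of_dist_lt hr hn hI hJ hIJ k.2)
      (hprod t) (hprod u) (ConnectedComponents.coe_eq_coe'.1 htu)
  have hmem (P) (hP : P ∈ s) : P ∈ t.1 ↔ P ∈ u.1 := by
    rw [← divisorCount_prod_ne_zero_iff (fun P hP ↦ (hs P hP).1) hinj (mem_powerset.1 t.2) hP,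
      ← divisorCount_prod_ne_zero_iff (fun P hP ↦ (hs P hP).1) hinj (mem_powerset.1 u.2) hP]
    obtain ⟨k, hk⟩ := Nat.exists_eq_succ_of_ne_zero (hs P hP).1.ne_zero
    have hkn : k < n := Nat.lt_of_succ_le (hk ▸ (hs P hP).2)
    rw [hk, congrFun hcount ⟨k, hkn⟩]
  refine Subtype.ext (Finset.ext fun P ↦ ⟨fun h ↦ ?_, fun h ↦ ?_⟩)
  · exact (hmem P (mem_powerset.1 t.2 h)).1 h
  · exact (hmem P (mem_powerset.1 u.2 h)).2 h

end ComponentBound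

section Asymptotics

lemma eventually_mul_sq_le_exp_rpow_div_two (C : ℝ) {γ : ℝ} (hγ : 0 < γ) :
    ∀ᶠ r : ℝ in atTop, C * r ^ 2 ≤ Real.exp (r ^ γ / 2) := by
  have hlittle := ((isLittleO_rpow_exp_pos_mul_atTop (2 / γ) (one_half_pos (α := ℝ))).const_mul_left
    C).bound one_pos
  filter_upwards [(tendsto_rpow_atTop hγ).eventually hlittle, eventually_ge_atTop 0] with r h hr
  rw [← Real.rpow_mul hr, mul_div_cancel₀ _ hγ.ne', Real.rpow_two, one_mul,
    Real.norm_of_nonneg (Real.exp_pos _).le, one_div_mul_eq_div] at h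
  exact (le_abs_self _).trans h

lemma exp_div_two_mul_le_rpow {k r : ℝ} (hk : 1 ≤ k) (hr : 0 ≤ r) :
    Real.exp (r / (2 * k)) ≤ ((k + 1) / k) ^ r := by
  have hk0 : 0 < k := by linarith
  have hpos : 0 < (k + 1) / k := by positivity
  rw [Real.rpow_def_of_pos hpos, Real.exp_le_exp]
  calc r / (2 * k) = 1 / (2 * k) * r := by ring
    _ ≤ 1 / (k + 1) * r := by gcongr; linarith
    _ = (1 - ((k + 1) / k)⁻¹) * r := by
        congr 1
        field_simp
        ring
    _ ≤ Real.log ((k + 1) / k) * r := by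
        gcongr
        exact Real.one_sub_inv_le_log_of_pos hpos

variable (K : Type*) [Field K] [NumberField K]

lemma eventually_hasSmallTails {β : ℝ} (hβ : β < 1) :
    ∀ᶠ r : ℝ in atTop, HasSmallTails K r ⌊r ^ β⌋₊ := by
  set Z := partialZeta 2 (Set.univ : Set (Ideal (𝓞 K)))
  have hZ : 0 ≤ Z := partialZeta_nonneg _ _
  filter_upwards [eventually_mul_sq_le_exp_rpow_div_two (8 * Z) (sub_pos.2 hβ),
    eventually_ge_atTop 2] with r hexp hr k hk
  have hr0 : 0 < r := by linarith
  have hk1 : (1 : ℝ) ≤ k := mod_cast (mem_Icc.1 hk).1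
  have hk0 : (0 : ℝ) < k := by linarith
  have hkβ : (k : ℝ) ≤ r ^ β :=
    (Nat.cast_le.2 (mem_Icc.1 hk).2).trans (Nat.floor_le (by positivity))
  have hkr : (k : ℝ) ≤ r :=
    hkβ.trans (Real.rpow_le_self_of_one_le (by linarith) hβ.le)
  have hmain : 2 * Z * (k + 1 : ℝ) ^ 2 ≤ ((k + 1) / k : ℝ) ^ r := by
    calc 2 * Z * (k + 1 : ℝ) ^ 2 ≤ 2 * Z * (2 * r) ^ 2 := by gcongr; linarith
      _ = 8 * Z * r ^ 2 := by ring
      _ ≤ Real.exp (r ^ (1 - β) / 2) := hexp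
      _ = Real.exp (r / (2 * r ^ β)) := by
          rw [Real.rpow_sub hr0, Real.rpow_one, div_div, mul_comm]
      _ ≤ Real.exp (r / (2 * k)) := by gcongr
      _ ≤ ((k + 1) / k : ℝ) ^ r := exp_div_two_mul_le_rpow hk1 hr0.le
  calc partialZeta r {D : Ideal (𝓞 K) | k < Ideal.absNorm D}
      ≤ (k + 1 : ℝ) ^ (2 - r) * Z :=
        partialZeta_le_rpow_mul one_lt_two hr (by positivity) fun D hD ↦ mod_cast hD
    _ = 2 * Z * (k + 1 : ℝ) ^ 2 * ((k + 1 : ℝ) ^ r)⁻¹ / 2 := by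
        rw [Real.rpow_sub (by positivity), Real.rpow_two]
        ring
    _ ≤ ((k + 1) / k : ℝ) ^ r * ((k + 1 : ℝ) ^ r)⁻¹ / 2 := by gcongr
    _ = (k : ℝ) ^ (-r) / 2 := by
        rw [Real.div_rpow (by positivity) hk0.le, Real.rpow_neg hk0.le]
        field_simp

lemma exists_eventually_mul_rpow_le_log_card_connectedComponents {α : ℝ} (hα₀ : 0 < α)
    (hα₁ : α < 1) :
    ∃ μ > 0, ∀ᶠ r : ℝ in atTop, μ * r ^ α ≤ Real.log (Nat.card (ConnectedComponents
      ↥(closure (sigmaK K r '' {I : Ideal (𝓞 K) | I ≠ 0})))) := by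
  obtain ⟨β, hαβ, hβ⟩ := exists_between hα₁
  obtain ⟨c, hc, hprimes⟩ := exists_eventually_degreeOnePrimes K (η := β / α - 1)
    (sub_pos.2 ((one_lt_div hα₀).2 hαβ))
  refine ⟨c * Real.log 2, mul_pos hc (Real.log_pos one_lt_two), ?_⟩
  filter_upwards [(tendsto_rpow_atTop hα₀).eventually hprimes, eventually_hasSmallTails K hβ,
    eventually_gt_atTop 1] with r ⟨s, hs, hinj, hcard⟩ htails hr
  have hpow : (r ^ α) ^ (1 + (β / α - 1)) = r ^ β := by
    rw [← Real.rpow_mul (by linarith), add_sub_cancel, mul_div_cancel₀ _ hα₀.ne']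
  have hfloor : 0 < ⌊r ^ β⌋₊ := Nat.floor_pos.2 (Real.one_le_rpow hr.le (hα₀.trans hαβ).le)
  have hcomp := two_pow_card_le_card_connectedComponents hr hfloor htails
    (fun P hP ↦ ⟨(hs P hP).1, Nat.le_floor (hpow ▸ (hs P hP).2.2)⟩) hinj
  calc c * Real.log 2 * r ^ α = c * r ^ α * Real.log 2 := by ring
    _ ≤ #s * Real.log 2 := by gcongr
    _ = Real.log (2 ^ #s) := (Real.log_pow _ _).symm
    _ ≤ _ := Real.log_le_log (by positivity) (mod_cast hcomp)

end Asymptotics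

theorem stmt4_general (K : Type*) [Field K] [NumberField K]
    (ε : ℝ) (hε : 0 < ε) :
    ∃ μ r₀ : ℝ, 0 < μ ∧ 0 < r₀ ∧ ∀ r : ℝ, r₀ < r →
      μ * (r ^ (1 / (1 + ε)) / Real.log r) <
        Real.log (Nat.card (ConnectedComponents
          ↥(closure (sigmaK K r '' {I : Ideal (𝓞 K) | I ≠ 0})))) := by
  obtain ⟨μ, hμ, hev⟩ := exists_eventually_mul_rpow_le_log_card_connectedComponents K
    (α := 1 / (1 + ε)) (by positivity) ((div_lt_one (by positivity)).2 (by linarith))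
  obtain ⟨r₀, hr₀⟩ := eventually_atTop.1
    ((hev.and (eventually_gt_atTop 0)).and (Real.tendsto_log_atTop.eventually_gt_atTop 1))
  refine ⟨μ, r₀, hμ, (hr₀ r₀ le_rfl).1.2, fun r hr ↦ ?_⟩
  obtain ⟨⟨hcard, hrpos⟩, hlog⟩ := hr₀ r hr.le
  have hpow : 0 < r ^ (1 / (1 + ε)) := Real.rpow_pos_of_pos hrpos _
  calc μ * (r ^ (1 / (1 + ε)) / Real.log r) < μ * r ^ (1 / (1 + ε)) :=
        mul_lt_mul_of_pos_left (div_lt_self hpow hlog) hμ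
    _ ≤ _ := hcard

/-- For a finite Galois extension `K/ℚ` and every `ε > 0`, there are constants
`μ, r₀ > 0` such that for all `r > r₀`,
`log C_{r,K} > μ · r^{1/(1+ε)} / log r`, where `C_{r,K}` is the number of connected
components of the closure of the image of `σ_{r,K}` on nonzero ideals. -/
theorem stmt4 (K : Type*) [Field K] [NumberField K] [IsGalois ℚ K]
    (ε : ℝ) (hε : 0 < ε) :
    ∃ μ r₀ : ℝ, 0 < μ ∧ 0 < r₀ ∧ ∀ r : ℝ, r₀ < r →
      μ * (r ^ (1 / (1 + ε)) / Real.log r) <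
        Real.log (Nat.card (ConnectedComponents
          ↥(closure (sigmaK K r '' {I : Ideal (𝓞 K) | I ≠ 0})))) :=
  stmt4_general K ε hε
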